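/- arXiv:2006.15287 — 5 statements merged into one kernel-verified Lean document; each statement's English description precedes it below -/
import Mathlib

section
/- Let L ≥ 3 and s be positive integers with L ≥ s+1. Then for every integer N ≥ Γ(s), the number of partitions of N lying in C*_{L,s} is at least the number of partitions of N lying in D_{L,s}. -/
/-- `D_{L,s}`: nonempty partitions with all parts in `{s+1, ..., L+s}`. -/
def InD (L s : ℕ) {N : ℕ} (p : N.Partition) : Prop :=
  p.parts ≠ 0 ∧ ∀ x ∈ p.parts, s + 1 ≤ x ∧ x ≤ L + s

/-- `I_{L,s,k}`: partitions with smallest part `s`, all parts `≤ L+s`, and no part equal to `k`. -/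
def InI (L s k : ℕ) {N : ℕ} (p : N.Partition) : Prop :=
  s ∈ p.parts ∧ (∀ x ∈ p.parts, s ≤ x ∧ x ≤ L + s) ∧ k ∉ p.parts

/-- `C*_{L,s}`: partitions with smallest part `s`, all parts `≤ L+s`, and no part equal to `L`. -/
def InCStar (L s : ℕ) {N : ℕ} (p : N.Partition) : Prop :=
  s ∈ p.parts ∧ (∀ x ∈ p.parts, s ≤ x ∧ x ≤ L + s) ∧ L ∉ p.parts

/-- `P_{L,s} = (s+1)(s+2)⋯(s+L)`. -/
def prodP (L s : ℕ) : ℕ := ∏ i ∈ Finset.range L, (s + 1 + i)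

/-- `γ(L,s)`. -/
def gammaLS (L s : ℕ) : ℕ :=
  (∑ i ∈ Finset.range L, (s + 1 + i)) *
    (prodP L s ^ ((prodP L s ^ 2 - 1) * L + 2) + ((prodP L s ^ 2 - 1) * L - 2) * prodP L s)

/-- `Γ(s) = γ(3s+2, s)`. -/
def GammaS (s : ℕ) : ℕ := gammaLS (3 * s + 2) s

/-!
Let `S = {s + 1, ..., L + s} \ {L}`. Removing one part `s` from the partitions in `C*_{L,s}`, we
compare the numbers of partitions of `N` with parts in `S ∪ {L}` and of `N - s` with parts in
`S ∪ {s}`; the difference of the two generating functions is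
`(X ^ s / (1 - X ^ s) - 1 / (1 - X ^ L)) * ∏ t ∈ S, 1 / (1 - X ^ t)`.

For `s ≥ 2` choose `a, a + 1 ∈ S`. Partitions of `n` into parts `a`, `a + 1` and `t` number about
`n ^ 2 / (2 * a * (a + 1) * t)`, and since `s < L` the coefficients of
`Δ = (X ^ s / (1 - X ^ s) - 1 / (1 - X ^ L)) / ((1 - X ^ a) * (1 - X ^ (a + 1)))` become
nonnegative early and then grow quadratically. Multiplying by the remaining factors, the few
negative coefficients of `Δ` are absorbed: for large `n` the partitions of `n` number at most twice
the partitions of all smaller numbers that differ from `n` by at least a fixed amount, because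
some part is large or repeated often and its copies can be removed.

For `s = 1` the set `S` contains no multiple of `L`: trade the copies of `L` for ones, and if there
are none, trade any one part for ones. The number of ones so obtained reveals which trade was made.
-/

open Finset Nat.Partition PowerSeries

/-- The number of partitions of `n` all of whose parts lie in `T`. -/
def partitionCount (T : Finset ℕ) (n : ℕ) : ℕ := #(restricted n (· ∈ T))

lemma mem_restricted {p : ℕ → Prop} [DecidablePred p] {n : ℕ} {l : n.Partition} :
    l ∈ restricted n p ↔ ∀ i ∈ l.parts, p i := by
  simp [restricted]

lemma card_filter_le_count {T : Finset ℕ} {t k n : ℕ} (htT : t ∈ T) (ht : 0 < t)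
    (hkn : k * t ≤ n) :
    #{p ∈ restricted n (· ∈ T) | k ≤ p.parts.count t} = partitionCount T (n - k * t) := by
  simp only [partitionCount]
  refine card_bij'
    (fun p hp ↦ ⟨p.parts - Multiset.replicate k t,
      fun hi ↦ p.parts_pos (Multiset.mem_of_le tsub_le_self hi), ?_⟩)
    (fun q _ ↦ ⟨q.parts + Multiset.replicate k t, fun hi ↦ ?_, ?_⟩) ?_ ?_ ?_ ?_
  · have hle := Multiset.le_count_iff_replicate_le.mp (mem_filter.mp hp).2
    have hsum := congrArg Multiset.sum (tsub_add_cancel_of_le hle)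
    rw [Multiset.sum_add, Multiset.sum_replicate, smul_eq_mul, p.parts_sum] at hsum
    omega
  · rcases Multiset.mem_add.mp hi with hi | hi
    · exact q.parts_pos hi
    · rwa [Multiset.eq_of_mem_replicate hi]
  · simp [q.parts_sum, hkn]
  · intro p hp
    have hpT := mem_restricted.mp (mem_filter.mp hp).1
    exact mem_restricted.mpr fun i hi ↦ hpT i (Multiset.mem_of_le tsub_le_self hi)
  · intro q hq
    refine mem_filter.mpr ⟨mem_restricted.mpr fun i hi ↦ ?_, by simp⟩
    rcases Multiset.mem_add.mp hi with hi | hi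
    · exact mem_restricted.mp hq i hi
    · rwa [Multiset.eq_of_mem_replicate hi]
  · intro p hp
    exact Nat.Partition.ext <| tsub_add_cancel_of_le <|
      Multiset.le_count_iff_replicate_le.mp (mem_filter.mp hp).2
  · exact fun q _ ↦ Nat.Partition.ext <| add_tsub_cancel_right _ _

lemma partitionCount_insert {T : Finset ℕ} {t : ℕ} (ht : 0 < t) (htT : t ∉ T) (n : ℕ) :
    partitionCount (insert t T) n =
      partitionCount T n + if t ≤ n then partitionCount (insert t T) (n - t) else 0 := by
  have hwithout : {p ∈ restricted n (· ∈ insert t T) | ¬ 1 ≤ p.parts.count t}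
      = restricted n (· ∈ T) := by
    ext p
    simp only [mem_filter, mem_restricted, mem_insert, Multiset.one_le_count_iff_mem]
    grind
  rw [partitionCount, ← card_filter_add_card_filter_not (fun p ↦ 1 ≤ p.parts.count t), hwithout,
    add_comm, partitionCount, add_right_inj]
  split_ifs with htn
  · simpa using card_filter_le_count (mem_insert_self t T) ht ((one_mul t).trans_le htn)
  · refine card_eq_zero.mpr (filter_eq_empty_iff.mpr fun p _ hp ↦ htn ?_)
    exact le_of_mem_parts (Multiset.one_le_count_iff_mem.mp hp)

lemma partitionCount_insert_eq_sum {T : Finset ℕ} {t : ℕ} (ht : 0 < t) (htT : t ∉ T) (n : ℕ) :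
    partitionCount (insert t T) n = ∑ k ∈ range (n / t + 1), partitionCount T (n - k * t) := by
  induction n using Nat.strong_induction_on with
  | _ n ih =>
    rw [partitionCount_insert ht htT]
    split_ifs with htn
    · rw [ih (n - t) (by omega), Nat.div_eq_sub_div ht htn, sum_range_succ' _ ((n - t) / t + 1),
        add_comm]
      simp only [add_mul, one_mul, zero_mul, Nat.sub_zero, Nat.sub_sub, add_comm t]
    · simp [Nat.div_eq_of_lt (not_le.mp htn)]

lemma partitionCount_empty (n : ℕ) : partitionCount ∅ n = if n = 0 then 1 else 0 := by
  split_ifs with hn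
  · subst hn
    simp [partitionCount, restricted]
  · refine card_eq_zero.mpr (eq_empty_of_forall_notMem fun p hp ↦ hn ?_)
    have hparts : p.parts = 0 :=
      Multiset.eq_zero_of_forall_notMem fun i hi ↦ notMem_empty i (mem_restricted.mp hp i hi)
    rw [← p.parts_sum, hparts, Multiset.sum_zero]

lemma partitionCount_singleton {t : ℕ} (ht : 0 < t) (n : ℕ) :
    partitionCount {t} n = if t ∣ n then 1 else 0 := by
  induction n using Nat.strong_induction_on with
  | _ n ih =>
    rw [← insert_empty_eq, partitionCount_insert ht (notMem_empty t), partitionCount_empty,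
      insert_empty_eq]
    rcases n.eq_zero_or_pos with rfl | hn
    · simp [ht.ne']
    · rw [if_neg hn.ne', zero_add]
      split_ifs with htn hdvd hdvd
      · rw [ih _ (by omega), if_pos (Nat.dvd_sub hdvd dvd_rfl)]
      · rw [ih _ (by omega), if_neg fun h ↦ hdvd ((Nat.dvd_sub_iff_left htn dvd_rfl).mp h)]
      · exact absurd (Nat.le_of_dvd hn hdvd) htn
      · rfl

-- A partition into parts `a`, `b` is determined by the multiplicity of `b`, which by coprimality is
-- confined to one residue class modulo `a`.
lemma exists_partitionCount_pair_eq_count {a b : ℕ} (ha : 0 < a) (hb : 0 < b) (hne : b ≠ a)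
    (hab : a.Coprime b) (n : ℕ) :
    ∃ v, partitionCount {b, a} n = (n / b + 1).count (· ≡ v [MOD a]) := by
  obtain ⟨x, hxn, hxb⟩ := Nat.chineseRemainder hab n 0
  obtain ⟨v, rfl⟩ := (Nat.modEq_zero_iff_dvd).mp hxb
  refine ⟨v, ?_⟩
  rw [partitionCount_insert_eq_sum hb (by simpa using hne), Nat.count_eq_card_filter_range,
    card_filter]
  refine sum_congr rfl fun k hk ↦ ?_
  have hkn : k * b ≤ n := (Nat.le_div_iff_mul_le hb).mp (Nat.lt_succ_iff.mp (mem_range.mp hk))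
  have hiff : a ∣ n - k * b ↔ k ≡ v [MOD a] := by
    rw [← Nat.modEq_iff_dvd' hkn, mul_comm k]
    exact ⟨fun h ↦ (h.trans hxn.symm).cancel_left_of_coprime hab, fun h ↦ (h.mul_left b).trans hxn⟩
  rw [partitionCount_singleton ha, if_congr hiff rfl rfl]

lemma count_modEq_bounds {a : ℕ} (ha : 0 < a) (v m : ℕ) :
    a * m.count (· ≡ v [MOD a]) < m + a ∧ m < a * m.count (· ≡ v [MOD a]) + a := by
  have hdiv := Nat.div_add_mod m a
  have hmod := Nat.mod_lt m ha
  rw [Nat.count_modEq_card _ ha]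
  split_ifs with h
  · rw [mul_add]
    omega
  · rw [add_zero]
    omega

lemma mul_partitionCount_pair_bounds {a b : ℕ} (ha : 0 < a) (hb : 0 < b) (hne : b ≠ a)
    (hab : a.Coprime b) (n : ℕ) :
    a * b * partitionCount {b, a} n ≤ n + a * b ∧ n ≤ a * b * partitionCount {b, a} n + a * b := by
  obtain ⟨v, hv⟩ := exists_partitionCount_pair_eq_count ha hb hne hab n
  obtain ⟨hupper, hlower⟩ := count_modEq_bounds ha v (n / b + 1)
  rw [← hv] at hupper hlower
  have hle : b * (n / b) ≤ n := Nat.mul_div_le n b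
  have hlt : n < b * (n / b + 1) := Nat.lt_mul_div_succ n hb
  constructor <;> nlinarith

section ThreeParts

variable {T : Finset ℕ} {Q : ℕ}

-- As `h ≤ t`, the right-hand side grows by at least `2 * h * (n + Q)` from `n - t` to `n`, and by
-- `hT` the left-hand side grows by at most that much.
lemma partitionCount_insert_upper {h t : ℕ} (hh : 0 < h) (hht : h ≤ t) (htT : t ∉ T)
    (hT : ∀ n, Q * partitionCount T n ≤ n + Q) (n : ℕ) :
    2 * h * Q * partitionCount (insert t T) n ≤ (n + h) * (n + h + 2 * Q) := by
  induction n using Nat.strong_induction_on with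
  | _ n ih =>
    rw [partitionCount_insert (by omega) htT]
    have hTn := Nat.mul_le_mul_left (2 * h) (hT n)
    split_ifs with htn
    · have hprev : 2 * h * Q * partitionCount (insert t T) (n - t) ≤ n * (n + 2 * Q) :=
        (ih (n - t) (by omega)).trans (Nat.mul_le_mul (by omega) (by omega))
      nlinarith
    · nlinarith

lemma partitionCount_insert_lower {t : ℕ} (ht : 0 < t) (htT : t ∉ T)
    (hT : ∀ n, n ≤ Q * partitionCount T n + Q) (n : ℕ) :
    (n * (n - 2 * Q) : ℤ) ≤ 2 * t * Q * partitionCount (insert t T) n := by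
  induction n using Nat.strong_induction_on with
  | _ n ih =>
    rw [partitionCount_insert ht htT]
    have hTn : (n : ℤ) ≤ Q * partitionCount T n + Q := mod_cast hT n
    split_ifs with htn
    · have hprev := ih (n - t) (by omega)
      push_cast [htn] at hprev ⊢
      nlinarith
    · rcases le_total n Q with hnQ | hQn
      · have : (n * (n - 2 * Q) : ℤ) ≤ 0 := by nlinarith
        exact this.trans (by positivity)
      · push_cast
        zify at htn hQn
        nlinarith

variable {s L w n : ℕ}

lemma partitionCount_insert_gap (hs : 0 < s) (hsL : s < L) (hsT : s ∉ T) (hLT : L ∉ T)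
    (hupper : ∀ n, Q * partitionCount T n ≤ n + Q) (hlower : ∀ n, n ≤ Q * partitionCount T n + Q)
    (hsn : s ≤ n) :
    (n ^ 2 - (4 * s * (s + 1) + (4 * s + 2) * Q) * n - s * (s + 1) : ℤ) ≤
      2 * s * (s + 1) * Q *
        (partitionCount (insert s T) (n - s) - partitionCount (insert L T) n) := by
  have hU := partitionCount_insert_upper (Nat.succ_pos s) hsL hLT hupper n
  have hV := partitionCount_insert_lower hs hsT hlower (n - s)
  zify at hU
  push_cast [hsn] at hV
  linear_combination (s + 1 : ℤ) * hV + (s : ℤ) * hU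

lemma partitionCount_insert_gap_of_pow_le (hs : 0 < s) (hsL : s < L) (hsT : s ∉ T) (hLT : L ∉ T)
    (hsw : s + 4 ≤ w) (hQ : 0 < Q) (hQw : Q ≤ w ^ 2)
    (hupper : ∀ n, Q * partitionCount T n ≤ n + Q) (hlower : ∀ n, n ≤ Q * partitionCount T n + Q)
    (hn : w ^ 4 ≤ n) :
    (n * (n - 4 * w ^ 3) - w ^ 2 : ℤ) ≤
        2 * w ^ 4 * (partitionCount (insert s T) (n - s) - partitionCount (insert L T) n) ∧
      partitionCount (insert L T) n ≤ partitionCount (insert s T) (n - s) := by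
  have hwn : w ≤ n := (Nat.le_self_pow (by norm_num) w).trans hn
  have hgap := partitionCount_insert_gap hs hsL hsT hLT hupper hlower (by omega : s ≤ n)
  zify at hs hsw hQ hQw hn hwn ⊢
  generalize (partitionCount (insert s T) (n - s) : ℤ) = V at *
  generalize (partitionCount (insert L T) n : ℤ) = U at *
  generalize (s : ℤ) = s, (n : ℤ) = n, (w : ℤ) = w, (Q : ℤ) = Q at *
  have hlinear : 4 * s * (s + 1) + (4 * s + 2) * Q ≤ 4 * w ^ 3 := by nlinarith
  have hconst : s * (s + 1) ≤ w ^ 2 := by nlinarith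
  have hlead : s * (s + 1) * Q ≤ w ^ 4 := by nlinarith
  have hnum : n * (n - 4 * w ^ 3) - w ^ 2 ≤ 2 * s * (s + 1) * Q * (V - U) := by
    nlinarith
  have hnum_pos : 0 < n * (n - 4 * w ^ 3) - w ^ 2 := by
    have h5 : 5 * w ^ 3 ≤ n := by nlinarith [pow_pos (by linarith : 0 < w) 3]
    nlinarith [pow_pos (by linarith : 0 < w) 3]
  have hUV : 0 < V - U := pos_of_mul_pos_right (hnum_pos.trans_le hnum) (by positivity)
  constructor
  · nlinarith
  · linarith

lemma partitionCount_insert_add_le (hs : 0 < s) (hsL : s < L) (hsT : s ∉ T) (hLT : L ∉ T)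
    (hsw : s + 4 ≤ w) (hQ : 0 < Q) (hQw : Q ≤ w ^ 2)
    (hupper : ∀ n, Q * partitionCount T n ≤ n + Q) (hlower : ∀ n, n ≤ Q * partitionCount T n + Q)
    (hn : w ^ 9 ≤ n) :
    partitionCount (insert L T) n + 2 * w ^ 12 ≤ partitionCount (insert s T) (n - s) := by
  have hgap := (partitionCount_insert_gap_of_pow_le hs hsL hsT hLT hsw hQ hQw hupper hlower
    ((Nat.pow_le_pow_right (by omega) (by norm_num)).trans hn)).1
  zify at hsw hn ⊢
  have hw : (5 : ℤ) ≤ w := by omega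
  have hpow {i j : ℕ} (hij : i ≤ j) : (w ^ i : ℤ) ≤ w ^ j := pow_le_pow_right₀ (by omega) hij
  have hfactor : (5 * w ^ 7 : ℤ) ≤ n - 4 * w ^ 3 := by
    have hw2 : (9 : ℤ) * w ^ 7 ≤ w ^ 2 * w ^ 7 := by gcongr; nlinarith
    linarith [hpow (by norm_num : 3 ≤ 7), pow_add (w : ℤ) 2 7]
  have hprod : (w ^ 9 * (5 * w ^ 7) : ℤ) ≤ n * (n - 4 * w ^ 3) :=
    mul_le_mul hn hfactor (by positivity) (by positivity)
  have hscaled : (2 * w ^ 4 * (2 * w ^ 12) : ℤ) ≤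
      2 * w ^ 4 * (partitionCount (insert s T) (n - s) - partitionCount (insert L T) n) := by
    linarith [hpow (by norm_num : 2 ≤ 16)]
  have := le_of_mul_le_mul_left hscaled (by positivity)
  linarith

lemma partitionCount_insert_le_pow (hsL : s < L) (hLT : L ∉ T) (hsw : s + 4 ≤ w) (hQ : 0 < Q)
    (hQw : Q ≤ w ^ 2) (hupper : ∀ n, Q * partitionCount T n ≤ n + Q) (hn : n ≤ w ^ 4) :
    partitionCount (insert L T) n ≤ w ^ 8 := by
  have hU := partitionCount_insert_upper (Nat.succ_pos s) hsL hLT hupper n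
  have hw : 4 ≤ w := by omega
  refine Nat.le_of_mul_le_mul_left ?_ two_pos
  calc 2 * partitionCount (insert L T) n
      ≤ 2 * (s + 1) * Q * partitionCount (insert L T) n := Nat.mul_le_mul_right _ (by nlinarith)
    _ ≤ (n + (s + 1)) * (n + (s + 1) + 2 * Q) := hU
    _ ≤ (w ^ 4 + w) * (w ^ 4 + w + 2 * w ^ 2) := by gcongr <;> omega
    _ ≤ 2 * w ^ 8 := by
      have hw2 : 4 * 4 ≤ w * w := Nat.mul_le_mul hw hw
      nlinarith [Nat.mul_le_mul_right (w ^ 6) hw2, Nat.mul_le_mul_right (w ^ 5) hw]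

end ThreeParts

lemma partitionCount_le_sum_of_exists_le_count {T : Finset ℕ} (hT : 0 ∉ T) {n : ℕ} (k : ℕ → ℕ)
    (h : ∀ p : n.Partition, ∃ y ∈ p.parts, k y ≤ p.parts.count y) :
    partitionCount T n ≤ ∑ y ∈ T with k y * y ≤ n, partitionCount T (n - k y * y) := by
  have hcover : restricted n (· ∈ T) ⊆ ({y ∈ T | k y * y ≤ n} : Finset ℕ).biUnion
      fun y ↦ {p ∈ restricted n (· ∈ T) | k y ≤ p.parts.count y} := by
    intro p hp
    obtain ⟨y, hy, hky⟩ := h p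
    have hsum : k y * y ≤ n := by
      obtain ⟨rest, hrest⟩ :=
        Multiset.le_iff_exists_add.mp (Multiset.le_count_iff_replicate_le.mp hky)
      rw [← p.parts_sum, hrest, Multiset.sum_add, Multiset.sum_replicate, smul_eq_mul]
      exact Nat.le_add_right _ _
    exact mem_biUnion.mpr ⟨y, mem_filter.mpr ⟨mem_restricted.mp hp y hy, hsum⟩,
      mem_filter.mpr ⟨hp, hky⟩⟩
  refine (card_le_card hcover).trans (card_biUnion_le.trans_eq (sum_congr rfl fun y hy ↦ ?_))
  obtain ⟨hyT, hyn⟩ := mem_filter.mp hy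
  exact card_filter_le_count hyT (Nat.pos_of_ne_zero fun h0 ↦ hT (h0 ▸ hyT)) hyn

lemma exists_large_part_or_count {M n : ℕ} (hn : M ^ 3 < n) (p : n.Partition) :
    ∃ y ∈ p.parts, (if M ≤ y then 1 else M) ≤ p.parts.count y := by
  by_contra! hsmall
  have hpart : ∀ y ∈ p.parts, y < M ∧ p.parts.count y < M := by
    intro y hy
    have := hsmall y hy
    have := Multiset.one_le_count_iff_mem.mpr hy
    split_ifs at * <;> omega
  have hsub : p.parts.toFinset ⊆ range M := fun y hy ↦
    mem_range.mpr (hpart y (Multiset.mem_toFinset.mp hy)).1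
  refine hn.not_ge ?_
  calc n = ∑ y ∈ p.parts.toFinset, p.parts.count y • y := by
        rw [← sum_multiset_count, p.parts_sum]
    _ ≤ ∑ _ ∈ p.parts.toFinset, M * M := sum_le_sum fun y hy ↦ by
        obtain ⟨hyM, hcount⟩ := hpart y (Multiset.mem_toFinset.mp hy)
        exact Nat.mul_le_mul hcount.le hyM.le
    _ ≤ ∑ _ ∈ range M, M * M := sum_le_sum_of_subset hsub
    _ = M ^ 3 := by simp [pow_succ, mul_assoc]

lemma sum_comp_sub_le_of_injOn (c : ℕ → ℕ) {M n : ℕ} {I : Finset ℕ} {g : ℕ → ℕ}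
    (hg : ∀ y ∈ I, M ≤ g y ∧ g y ≤ n) (hinj : Set.InjOn g I) :
    ∑ y ∈ I, c (n - g y) ≤ ∑ i ∈ range (n - M + 1), c i := by
  have hinj' : Set.InjOn (fun y ↦ n - g y) I := fun y hy z hz hyz ↦ hinj hy hz <| by
    have := hg y hy
    have := hg z hz
    simp only at hyz
    omega
  rw [← sum_image hinj']
  refine sum_le_sum_of_subset fun i hi ↦ ?_
  obtain ⟨y, hy, rfl⟩ := mem_image.mp hi
  have := hg y hy
  exact mem_range.mpr (by omega)

-- A partition of `n > M ^ 3` has a part `y ≥ M` or `M` copies of some part `y < M`; removing these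
-- leaves a partition of a number at most `n - M`, and each number arises from at most one `y` of
-- either kind.
lemma partitionCount_le_two_mul_sum {T : Finset ℕ} (hT : 0 ∉ T) {M n : ℕ} (hM : 0 < M)
    (hn : M ^ 3 < n) :
    partitionCount T n ≤ 2 * ∑ i ∈ range (n - M + 1), partitionCount T i := by
  refine (partitionCount_le_sum_of_exists_le_count hT _ (exists_large_part_or_count hn)).trans ?_
  rw [← sum_filter_add_sum_filter_not _ (M ≤ ·), two_mul]
  have hpos {y : ℕ} (hy : y ∈ T) : 0 < y := Nat.pos_of_ne_zero fun h0 ↦ hT (h0 ▸ hy)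
  refine Nat.add_le_add (sum_comp_sub_le_of_injOn _ (fun y hy ↦ ?_) fun y hy z hz hyz ↦ ?_)
    (sum_comp_sub_le_of_injOn _ (fun y hy ↦ ?_) fun y hy z hz hyz ↦ ?_)
  · grind
  · grind
  · obtain ⟨⟨hyT, hyn⟩, hyM⟩ : (y ∈ T ∧ _ ≤ n) ∧ ¬ M ≤ y := by simpa only [mem_filter] using hy
    refine ⟨?_, hyn⟩
    rw [if_neg hyM]
    exact Nat.le_mul_of_pos_right M (hpos hyT)
  · rw [mem_coe, mem_filter] at hy hz
    simp only [if_neg hy.2, if_neg hz.2] at hyz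
    exact Nat.eq_of_mul_eq_mul_left hM hyz

lemma partitionCount_insert_le_insert_one {T : Finset ℕ} {L N : ℕ} (h0 : 0 ∉ T) (h1 : 1 ∉ T)
    (hL : 0 < L) (hT : ∀ y ∈ T, ¬ L ∣ y) (hN : 0 < N) :
    partitionCount (insert L T) N ≤ partitionCount (insert 1 T) (N - 1) := by
  let c := partitionCount T
  have hone : ∑ j ∈ Icc 1 N, c (N - j) = partitionCount (insert 1 T) (N - 1) := by
    rw [partitionCount_insert_eq_sum one_pos h1, Nat.div_one, Nat.sub_add_cancel hN,
      ← Ico_add_one_right_eq_Icc, sum_Ico_eq_sum_range, Nat.add_sub_cancel]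
    simp only [mul_one, Nat.sub_sub, c]
  have hmultiples :
      ∑ k ∈ range (N / L), c (N - (k + 1) * L) ≤ ∑ j ∈ Icc 1 N with L ∣ j, c (N - j) := by
    have hinj : Set.InjOn (fun k ↦ (k + 1) * L) (range (N / L)) := fun k _ l _ hkl ↦ by
      simpa [hL.ne'] using hkl
    rw [← sum_image (f := fun j ↦ c (N - j)) hinj]
    refine sum_le_sum_of_subset (image_subset_iff.mpr fun k hk ↦ ?_)
    have hkN : (k + 1) * L ≤ N := (Nat.le_div_iff_mul_le hL).mp (mem_range.mp hk)
    exact mem_filter.mpr ⟨mem_Icc.mpr ⟨by nlinarith, hkN⟩, dvd_mul_left L _⟩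
  have hremove : c N ≤ ∑ j ∈ Icc 1 N with ¬ L ∣ j, c (N - j) := by
    have hexists (p : N.Partition) : ∃ y ∈ p.parts, 1 ≤ p.parts.count y := by
      simp only [Multiset.one_le_count_iff_mem, and_self]
      refine Multiset.exists_mem_of_ne_zero fun hp ↦ hN.ne ?_
      rw [← p.parts_sum, hp, Multiset.sum_zero]
    refine (partitionCount_le_sum_of_exists_le_count h0 _ hexists).trans ?_
    simp only [one_mul]
    refine sum_le_sum_of_subset fun y hy ↦ ?_
    grind
  calc partitionCount (insert L T) N = ∑ k ∈ range (N / L), c (N - (k + 1) * L) + c N := by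
        rw [partitionCount_insert_eq_sum hL fun h ↦ hT L h dvd_rfl, sum_range_succ', zero_mul,
          Nat.sub_zero]
    _ ≤ ∑ j ∈ Icc 1 N with L ∣ j, c (N - j) + ∑ j ∈ Icc 1 N with ¬ L ∣ j, c (N - j) :=
        Nat.add_le_add hmultiples hremove
    _ = partitionCount (insert 1 T) (N - 1) := by rw [sum_filter_add_sum_filter_not, hone]


/-- The generating function of partitions with all parts in `T`, over the integers. -/
noncomputable def partitionSeries (T : Finset ℕ) : ℤ⟦X⟧ := mk fun n ↦ (partitionCount T n : ℤ)

@[simp]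
lemma coeff_partitionSeries (T : Finset ℕ) (n : ℕ) :
    coeff n (partitionSeries T) = partitionCount T n :=
  coeff_mk _ _

lemma partitionSeries_empty : partitionSeries ∅ = 1 := by
  ext n
  simp [partitionCount_empty, coeff_one]

lemma one_sub_X_pow_mul_partitionSeries_insert {T : Finset ℕ} {t : ℕ} (ht : 0 < t) (htT : t ∉ T) :
    (1 - X ^ t) * partitionSeries (insert t T) = partitionSeries T := by
  ext n
  rw [sub_mul, one_mul, map_sub, coeff_X_pow_mul']
  simp only [coeff_partitionSeries, partitionCount_insert ht htT n]
  split_ifs <;> simp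

lemma partitionSeries_union {S T : Finset ℕ} (hS : 0 ∉ S) (hST : Disjoint S T) :
    partitionSeries (S ∪ T) = partitionSeries S * partitionSeries T := by
  induction S using Finset.induction_on with
  | empty => rw [empty_union, partitionSeries_empty, one_mul]
  | insert t S htS ih =>
    obtain ⟨htT, hST⟩ := disjoint_insert_left.mp hST
    have ht : 0 < t := Nat.pos_of_ne_zero fun h ↦ hS (h ▸ mem_insert_self t S)
    have hne : (1 - X ^ t : ℤ⟦X⟧) ≠ 0 := fun h ↦ by
      simpa [ht.ne'] using congrArg (coeff 0) h
    refine mul_left_cancel₀ hne ?_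
    rw [insert_union, one_sub_X_pow_mul_partitionSeries_insert ht (by simp [htS, htT]), ← mul_assoc,
      one_sub_X_pow_mul_partitionSeries_insert ht htS, ih (by grind) hST]


-- The negative coefficients of `Δ` occur below `n₀`, so they meet at most `n₀` coefficients of `P`;
-- each of these is at most `C` times the sum that is multiplied by the large coefficients of `Δ`.
lemma coeff_mul_nonneg_of_gap {P Δ : ℤ⟦X⟧} {n₀ n₁ N : ℕ} {B C : ℤ} (hB : 0 ≤ B) (hC : 0 ≤ C)
    (hn : n₀ ≤ n₁) (hN : n₁ ≤ N) (hP : ∀ n, 0 ≤ coeff n P)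
    (hsmall : ∀ n < n₀, -B ≤ coeff n Δ) (hmid : ∀ n, n₀ ≤ n → 0 ≤ coeff n Δ)
    (hlarge : ∀ n, n₁ ≤ n → n₀ * B * C ≤ coeff n Δ)
    (hspread : ∀ m ≤ N, N < m + n₀ → coeff m P ≤ C * ∑ i ∈ range (N - n₁ + 1), coeff i P) :
    0 ≤ coeff N (P * Δ) := by
  set S := ∑ i ∈ range (N - n₁ + 1), coeff i P
  rw [coeff_mul, Nat.sum_antidiagonal_eq_sum_range_succ (fun i j ↦ coeff i P * coeff j Δ)]
  have hgain : n₀ * B * C * S =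
      ∑ i ∈ range (N + 1), coeff i P * (if i < N - n₁ + 1 then n₀ * B * C else 0) := by
    have hfilter : {i ∈ range (N + 1) | i < N - n₁ + 1} = range (N - n₁ + 1) := by grind
    simp only [mul_ite, mul_zero]
    rw [← sum_filter, hfilter, ← sum_mul, mul_comm]
  have hloss : ∑ i ∈ range (N + 1), coeff i P * (if N < i + n₀ then B else 0) ≤ n₀ * B * C * S := by
    have hcard : #{i ∈ range (N + 1) | N < i + n₀} ≤ n₀ := by
      have hsub : {i ∈ range (N + 1) | N < i + n₀} ⊆ Ico (N + 1 - n₀) (N + 1) := by grind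
      simpa using (card_le_card hsub).trans_eq (Nat.card_Ico _ _) |>.trans (by omega)
    simp only [mul_ite, mul_zero]
    rw [← sum_filter]
    calc ∑ i ∈ range (N + 1) with N < i + n₀, coeff i P * B
        ≤ #{i ∈ range (N + 1) | N < i + n₀} • (B * C * S) := sum_le_card_nsmul _ _ _ fun i hi ↦ by
          have := mul_le_mul_of_nonneg_left (hspread i (by grind) (by grind)) hB
          linarith
      _ ≤ n₀ • (B * C * S) := by
          have : 0 ≤ B * C * S := mul_nonneg (mul_nonneg hB hC) (sum_nonneg fun i _ ↦ hP i)
          gcongr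
      _ = n₀ * B * C * S := by simp only [nsmul_eq_mul, mul_assoc]
  calc 0 ≤ ∑ i ∈ range (N + 1), (coeff i P * (if i < N - n₁ + 1 then n₀ * B * C else 0) -
        coeff i P * (if N < i + n₀ then B else 0)) := by
        rw [sum_sub_distrib, ← hgain]
        linarith
    _ ≤ ∑ i ∈ range (N + 1), coeff i P * coeff (N - i) Δ := sum_le_sum fun i hi ↦ by
        rw [← mul_sub]
        refine mul_le_mul_of_nonneg_left ?_ (hP i)
        have hi := mem_range.mp hi
        split_ifs with h₁ h₀ h₀
        · omega
        · simpa using hlarge (N - i) (by omega)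
        · simpa using hsmall (N - i) (by omega)
        · simpa using hmid (N - i) (by omega)

lemma partitionSeries_sdiff_mul_insert {S T : Finset ℕ} {t : ℕ} (h0 : 0 ∉ S) (hTS : T ⊆ S)
    (htS : t ∉ S) :
    partitionSeries (S \ T) * partitionSeries (insert t T) = partitionSeries (insert t S) := by
  rw [← partitionSeries_union (by grind) (by grind [disjoint_left]), union_insert,
    sdiff_union_of_subset hTS]

lemma partitionCount_le_two_mul_sum_of_pow_le {T : Finset ℕ} {w m N : ℕ} (h0 : 0 ∉ T)
    (hw : 2 ≤ w) (hN : w ^ 28 ≤ N) (hmN : m ≤ N) (hNm : N < m + w ^ 4) :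
    partitionCount T m ≤ 2 * ∑ i ∈ range (N - w ^ 9 + 1), partitionCount T i := by
  have hm : (w ^ 9) ^ 3 < m := by
    have h27 : w ^ 4 ≤ w ^ 27 := Nat.pow_le_pow_right (by omega) (by norm_num)
    have h28 : 2 * w ^ 27 ≤ w ^ 28 := by
      rw [pow_succ' w 27]
      gcongr
    rw [← pow_mul, show 9 * 3 = 27 from rfl]
    omega
  refine (partitionCount_le_two_mul_sum h0 (by positivity) hm).trans ?_
  gcongr

-- The factor `2 * w ^ 12` of `partitionCount_insert_add_le` is `n₀ * B * C` for `n₀ = w ^ 4`,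
-- `B = w ^ 8`, `C = 2`, and `w ^ 28` makes every `m > N - n₀` exceed `(w ^ 9) ^ 3`, as needed for
-- `partitionCount_le_two_mul_sum`.
lemma partitionCount_insert_le_insert_of_subset {S T : Finset ℕ} {Q s L w N : ℕ} (h0 : 0 ∉ S)
    (hTS : T ⊆ S) (hs : 0 < s) (hsL : s < L) (hsS : s ∉ S) (hLS : L ∉ S) (hsw : s + 4 ≤ w)
    (hQ : 0 < Q) (hQw : Q ≤ w ^ 2) (hupper : ∀ n, Q * partitionCount T n ≤ n + Q)
    (hlower : ∀ n, n ≤ Q * partitionCount T n + Q) (hN : w ^ 28 ≤ N) :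
    partitionCount (insert L S) N ≤ partitionCount (insert s S) (N - s) := by
  have hsT : s ∉ T := fun h ↦ hsS (hTS h)
  have hLT : L ∉ T := fun h ↦ hLS (hTS h)
  have hpow {i j : ℕ} (hij : i ≤ j) : w ^ i ≤ w ^ j := Nat.pow_le_pow_right (by omega) hij
  have hsw4 : s ≤ w ^ 4 := le_trans (by omega) (Nat.le_self_pow (by norm_num) w)
  have hnonneg : 0 ≤ coeff N (partitionSeries (S \ T) *
      (X ^ s * partitionSeries (insert s T) - partitionSeries (insert L T))) := by
    refine coeff_mul_nonneg_of_gap (n₀ := w ^ 4) (n₁ := w ^ 9) (B := w ^ 8) (C := 2)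
      (by positivity) (by norm_num) (hpow (by norm_num)) ((hpow (by norm_num)).trans hN)
      (fun n ↦ by simp) (fun n hn ↦ ?small) (fun n hn ↦ ?mid) (fun n hn ↦ ?large)
      (fun m hmN hNm ↦ ?spread)
    case spread =>
      simp only [coeff_partitionSeries]
      exact_mod_cast partitionCount_le_two_mul_sum_of_pow_le (by grind) (by omega) hN hmN hNm
    all_goals simp only [map_sub, coeff_X_pow_mul', coeff_partitionSeries]
    case small =>
      have := partitionCount_insert_le_pow hsL hLT hsw hQ hQw hupper hn.le
      split_ifs <;> zify at this <;> linarith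
    case mid =>
      rw [if_pos (hsw4.trans hn), sub_nonneg]
      exact_mod_cast
        (partitionCount_insert_gap_of_pow_le hs hsL hsT hLT hsw hQ hQw hupper hlower hn).2
    case large =>
      have := partitionCount_insert_add_le hs hsL hsT hLT hsw hQ hQw hupper hlower hn
      rw [if_pos (hsw4.trans ((hpow (by norm_num)).trans hn))]
      zify at this
      push_cast
      linarith
  have hsN : s ≤ N := hsw4.trans ((hpow (by norm_num)).trans hN)
  rw [mul_sub, mul_left_comm, partitionSeries_sdiff_mul_insert h0 hTS hsS,
    partitionSeries_sdiff_mul_insert h0 hTS hLS, map_sub, coeff_X_pow_mul', if_pos hsN] at hnonneg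
  simpa using hnonneg

theorem partitionCount_insert_le_insert_of_coprime {S : Finset ℕ} {s L a b w N : ℕ} (h0 : 0 ∉ S)
    (hs : 0 < s) (hsL : s < L) (hsS : s ∉ S) (hLS : L ∉ S) (ha : a ∈ S) (hb : b ∈ S) (hne : b ≠ a)
    (hab : a.Coprime b) (haw : a ≤ w) (hbw : b ≤ w) (hsw : s + 4 ≤ w) (hN : w ^ 28 ≤ N) :
    partitionCount (insert L S) N ≤ partitionCount (insert s S) (N - s) := by
  have hpos {t : ℕ} (ht : t ∈ S) : 0 < t := Nat.pos_of_ne_zero fun h ↦ h0 (h ▸ ht)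
  have hbounds := mul_partitionCount_pair_bounds (hpos ha) (hpos hb) hne hab
  exact partitionCount_insert_le_insert_of_subset h0
    (insert_subset hb (singleton_subset_iff.mpr ha)) hs hsL hsS hLS hsw
    (Nat.mul_pos (hpos ha) (hpos hb)) ((Nat.mul_le_mul haw hbw).trans_eq (sq w).symm)
    (fun n ↦ (hbounds n).1) (fun n ↦ (hbounds n).2) hN

lemma partitionCount_Icc_le_Icc_erase {L s N : ℕ} (hs : 0 < s) (hsL : s < L)
    (hN : (s + 4) ^ 28 ≤ N) :
    partitionCount (Icc (s + 1) (L + s)) N ≤ partitionCount ((Icc s (L + s)).erase L) (N - s) := by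
  have hD : insert L ((Icc (s + 1) (L + s)).erase L) = Icc (s + 1) (L + s) :=
    insert_erase (by grind)
  have hC : insert s ((Icc (s + 1) (L + s)).erase L) = (Icc s (L + s)).erase L := by grind
  rw [← hD, ← hC]
  obtain rfl | hs2 : s = 1 ∨ 2 ≤ s := by omega
  · refine partitionCount_insert_le_insert_one (by simp) (by simp) (by omega) (fun y hy hLy ↦ ?_)
      ((by positivity : 0 < (1 + 4) ^ 28).trans_le hN)
    obtain ⟨hyL, hy⟩ := mem_erase.mp hy
    have hyIcc := mem_Icc.mp hy
    have hle := Nat.le_of_dvd (by omega) hLy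
    have hle_sub := Nat.le_of_dvd (by omega : 0 < y - L) (Nat.dvd_sub hLy dvd_rfl)
    omega
  · obtain ⟨a, hsa, has, haL, hLa, hLa'⟩ :
        ∃ a, s < a ∧ a ≤ s + 3 ∧ a + 1 ≤ L + s ∧ a ≠ L ∧ a + 1 ≠ L := by
      obtain h | h | h : L = s + 1 ∨ L = s + 2 ∨ s + 2 < L := by omega
      · exact ⟨s + 2, by omega⟩
      · exact ⟨s + 3, by omega⟩
      · exact ⟨s + 1, by omega⟩
    exact partitionCount_insert_le_insert_of_coprime (a := a) (b := a + 1) (by simp) hs hsL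
      (by simp) (by simp) (by grind) (by grind) (by omega) (by simp) (by omega) (by omega) le_rfl hN

lemma card_InD {L s N : ℕ} (hN : 0 < N) :
    Nat.card {p : N.Partition // InD L s p} = partitionCount (Icc (s + 1) (L + s)) N := by
  classical
  rw [Nat.card_eq_fintype_card, Fintype.card_subtype, partitionCount]
  congr 1
  ext p
  have hp : p.parts ≠ 0 := fun hp ↦ hN.ne (by rw [← p.parts_sum, hp, Multiset.sum_zero])
  simp [mem_restricted, InD, hp]

lemma card_InCStar {L s N : ℕ} (hs : 0 < s) (hsL : s < L) (hsN : s ≤ N) :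
    Nat.card {p : N.Partition // InCStar L s p} =
      partitionCount ((Icc s (L + s)).erase L) (N - s) := by
  classical
  have hsmem : s ∈ (Icc s (L + s)).erase L := by grind
  have hcount := card_filter_le_count hsmem hs ((one_mul s).trans_le hsN)
  rw [one_mul] at hcount
  rw [Nat.card_eq_fintype_card, Fintype.card_subtype, ← hcount]
  congr 1
  ext p
  simp only [mem_filter, mem_restricted, InCStar, Multiset.one_le_count_iff_mem]
  grind

lemma le_prodP {L s i : ℕ} (hi : i < L) : s + 1 + i ≤ prodP L s :=
  single_le_prod' (f := fun i ↦ s + 1 + i) (fun _ _ ↦ by omega) (mem_range.mpr hi)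

lemma pow_prodP_le_gammaLS {L s : ℕ} (hL : 0 < L) :
    prodP L s ^ ((prodP L s ^ 2 - 1) * L + 2) ≤ gammaLS L s := by
  have hsum : 0 < ∑ i ∈ range L, (s + 1 + i) :=
    sum_pos (fun i _ ↦ by omega) (nonempty_range_iff.mpr hL.ne')
  exact (Nat.le_add_right _ _).trans (Nat.le_mul_of_pos_left _ hsum)

lemma pow_le_GammaS {s : ℕ} (hs : 0 < s) : (s + 4) ^ 28 ≤ GammaS s := by
  have hP : s + 4 ≤ prodP (3 * s + 2) s := le_prodP (i := 3) (by omega)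
  have hP2 : 5 ^ 2 ≤ prodP (3 * s + 2) s ^ 2 := Nat.pow_le_pow_left (by omega) 2
  have hexp : 28 ≤ (prodP (3 * s + 2) s ^ 2 - 1) * (3 * s + 2) + 2 := by
    have : 24 * 5 ≤ (prodP (3 * s + 2) s ^ 2 - 1) * (3 * s + 2) :=
      Nat.mul_le_mul (by omega) (by omega)
    omega
  calc (s + 4) ^ 28 ≤ prodP (3 * s + 2) s ^ 28 := Nat.pow_le_pow_left hP 28
    _ ≤ prodP (3 * s + 2) s ^ ((prodP (3 * s + 2) s ^ 2 - 1) * (3 * s + 2) + 2) :=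
      Nat.pow_le_pow_right (by omega) hexp
    _ ≤ GammaS s := pow_prodP_le_gammaLS (by omega)

theorem stmt_8_general (L s : ℕ) (hs : 0 < s) (hLs : s + 1 ≤ L) (N : ℕ) (hN : (s + 4) ^ 28 ≤ N) :
    Nat.card {p : N.Partition // InCStar L s p} ≥ Nat.card {p : N.Partition // InD L s p} := by
  have hsN : s ≤ N := (by omega : s ≤ s + 4).trans ((Nat.le_self_pow (by norm_num) _).trans hN)
  rw [card_InD (hs.trans_le hsN), card_InCStar hs hLs hsN]
  exact partitionCount_Icc_le_Icc_erase hs hLs hN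

theorem stmt_8 (L s : ℕ) (hs : 0 < s) (hL : 3 ≤ L) (hLs : s + 1 ≤ L)
    (N : ℕ) (hN : GammaS s ≤ N) :
    Nat.card {p : N.Partition // InCStar L s p} ≥ Nat.card {p : N.Partition // InD L s p} :=
  stmt_8_general L s hs hLs N ((pow_le_GammaS hs).trans hN)
end

section
/- Let L be an integer with L ≥ 11. Then for every positive integer N with N ≠ 3 one has g_L(N) ≥ 0, and g_L(3) ≥ −1. Equivalently, the series G_{L,2}(q) + q^3 has all coefficients nonnegative. -/
/-- Partitions of `N` with smallest part equal to `2` and largest part at most `L+2`. -/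
def InSmall2 (L : ℕ) {N : ℕ} (p : N.Partition) : Prop :=
  2 ∈ p.parts ∧ ∀ x ∈ p.parts, 2 ≤ x ∧ x ≤ L + 2

/-- Nonempty partitions of `N` with smallest part at least `3` and
largest part minus smallest part at most `L`. -/
def InBig3 (L : ℕ) {N : ℕ} (p : N.Partition) : Prop :=
  p.parts ≠ 0 ∧ (∀ x ∈ p.parts, 3 ≤ x) ∧ ∀ x ∈ p.parts, ∀ y ∈ p.parts, x ≤ y + L

/-- `g_L(N)`: the coefficient of `q^N` in `G_{L,2}(q)`. -/
noncomputable def gL (L N : ℕ) : ℤ :=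
  (Nat.card {p : N.Partition // InSmall2 L p} : ℤ) -
    (Nat.card {p : N.Partition // InBig3 L p} : ℤ)

/-!
Let `p N` count the partitions of `N` into parts from `[3, L + 2]`, and let `a N`, `b N` be the two
counts whose difference is `gL L N`.

Subtracting `L` from a largest part exceeding `L + 2` gives `b N ≤ p N + b (N - L)`. On the other
side, a partition counted by `p N` can, unless `N` is `0` or `3`, be turned into one counted by
`a N` with at most three twos, in a way that loses no information: trade a `4` for `2 + 2`, or
`3 + 3` for `2 + 2 + 2`, or else extract a single `2` from the smallest part or the two smallest
parts. Adding the parts `2, 2, 2, L - 6` to a partition counted by `a (N - L)` yields one counted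
by `a N` with at least four twos, so `p N + a (N - L) ≤ a N`, and `b N ≤ a N` follows by induction.
The induction passes through the exception `N - L = 3` because `b 3 ≤ 1`, while
`2 + 2 + 2 + 2 + (L - 5)` is a partition of `L + 3` with at least four twos.
-/

open Finset

namespace BerkovichUncu

section Multisets

variable {α : Type*}

theorem cons_inj_of_forall_le [PartialOrder α] {a b : α} {s t : Multiset α}
    (ha : ∀ x ∈ s, a ≤ x) (hb : ∀ x ∈ t, b ≤ x) (h : a ::ₘ s = b ::ₘ t) : a = b ∧ s = t := by
  have hab : a ∈ b ::ₘ t := h ▸ Multiset.mem_cons_self a s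
  have hba : b ∈ a ::ₘ s := h ▸ Multiset.mem_cons_self b t
  have hle : a ≤ b := (Multiset.mem_cons.1 hba).elim ge_of_eq (ha b)
  have hge : b ≤ a := (Multiset.mem_cons.1 hab).elim ge_of_eq (hb a)
  obtain rfl := le_antisymm hle hge
  exact ⟨rfl, (Multiset.cons_inj_right a).1 h⟩

theorem exists_eq_cons_forall_le [LinearOrder α] {s : Multiset α} (hs : s ≠ 0) :
    ∃ a t, s = a ::ₘ t ∧ ∀ x ∈ t, a ≤ x := by
  obtain ⟨a, ha, hmin⟩ := s.toFinset.exists_min_image id (by simpa using hs)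
  rw [Multiset.mem_toFinset] at ha
  obtain ⟨t, rfl⟩ := Multiset.exists_cons_of_mem ha
  exact ⟨a, t, rfl, fun x hx => hmin x (by simp [hx])⟩

theorem exists_eq_cons_forall_ge [LinearOrder α] {s : Multiset α} (hs : s ≠ 0) :
    ∃ a t, s = a ::ₘ t ∧ ∀ x ∈ t, x ≤ a :=
  exists_eq_cons_forall_le (α := αᵒᵈ) hs

theorem eq_and_eq_of_replicate_add_eq {a : α} {k k' : ℕ} {u u' : Multiset α}
    (ha : a ∉ u) (ha' : a ∉ u')
    (h : Multiset.replicate k a + u = Multiset.replicate k' a + u') : k = k' ∧ u = u' := by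
  classical
  have hk := congrArg (Multiset.count a) h
  simp only [Multiset.count_add, Multiset.count_replicate_self, Multiset.count_eq_zero_of_notMem ha,
    Multiset.count_eq_zero_of_notMem ha', add_zero] at hk
  subst hk
  exact ⟨rfl, add_left_cancel h⟩

end Multisets

/-- `TradesForTwos k s u`: part of the multiset `s` is traded, keeping the sum, for `k` twos, and
`u` consists of the other parts after the trade. It is a relation because several trades may be
available for one `s`; what matters is that `k` and `u` determine `s`. -/
inductive TradesForTwos : ℕ → Multiset ℕ → Multiset ℕ → Prop
  | threes (w : Multiset ℕ) : TradesForTwos 3 (3 ::ₘ 3 ::ₘ w) w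
  | four (v : Multiset ℕ) : TradesForTwos 2 (4 ::ₘ v) v
  | split {y : ℕ} {w : Multiset ℕ} (hy : 5 ≤ y) (hw : ∀ z ∈ w, y ≤ z) :
      TradesForTwos 1 (3 ::ₘ y ::ₘ w) ((y + 1) / 2 ::ₘ (y + 2) / 2 ::ₘ w)
  | lower {x : ℕ} {v : Multiset ℕ} (hx : 5 ≤ x) (hv : ∀ z ∈ v, x ≤ z) :
      TradesForTwos 1 (x ::ₘ v) ((x - 2) ::ₘ v)

theorem exists_tradesForTwos {s : Multiset ℕ} (hs : ∀ x ∈ s, 3 ≤ x) (h₀ : s ≠ 0) (h₃ : s ≠ {3}) :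
    ∃ k u, TradesForTwos k s u := by
  by_cases h₄ : 4 ∈ s
  · obtain ⟨v, rfl⟩ := Multiset.exists_cons_of_mem h₄
    exact ⟨2, v, .four v⟩
  obtain ⟨x, v, rfl, hv⟩ := exists_eq_cons_forall_le h₀
  obtain ⟨hx, hv₃⟩ := Multiset.forall_mem_cons.1 hs
  obtain ⟨hx₄, hv₄⟩ : 4 ≠ x ∧ 4 ∉ v := by simpa using h₄
  obtain rfl | hx₅ : x = 3 ∨ 5 ≤ x := by omega
  · have hv₀ : v ≠ 0 := by rintro rfl; exact h₃ rfl
    obtain ⟨y, w, rfl, hw⟩ := exists_eq_cons_forall_le hv₀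
    have hy : 3 ≤ y := hv₃ y (Multiset.mem_cons_self y w)
    have hy₄ : 4 ≠ y := by rintro rfl; exact hv₄ (Multiset.mem_cons_self 4 w)
    obtain rfl | hy₅ : y = 3 ∨ 5 ≤ y := by omega
    · exact ⟨3, w, .threes w⟩
    · exact ⟨1, _, .split hy₅ hw⟩
  · exact ⟨1, _, .lower hx₅ hv⟩

namespace TradesForTwos

variable {k : ℕ} {s s' u : Multiset ℕ}

theorem pos (h : TradesForTwos k s u) : 0 < k := by
  cases h <;> norm_num

theorem le_three (h : TradesForTwos k s u) : k ≤ 3 := by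
  cases h <;> norm_num

theorem sum_eq (h : TradesForTwos k s u) : s.sum = k * 2 + u.sum := by
  cases h <;> simp only [Multiset.sum_cons] <;> omega

theorem three_le (h : TradesForTwos k s u) (hs : ∀ x ∈ s, 3 ≤ x) : ∀ x ∈ u, 3 ≤ x := by
  cases h <;> simp only [Multiset.forall_mem_cons] at hs ⊢ <;> grind

theorem le_of_forall_le {M : ℕ} (h : TradesForTwos k s u) (hs : ∀ x ∈ s, x ≤ M) :
    ∀ x ∈ u, x ≤ M := by
  cases h <;> simp only [Multiset.forall_mem_cons] at hs ⊢ <;> grind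

theorem split_injective {y y' : ℕ} {w w' : Multiset ℕ} (hy : 0 < y) (hw : ∀ z ∈ w, y ≤ z)
    (hy' : 0 < y') (hw' : ∀ z ∈ w', y' ≤ z)
    (h : (y + 1) / 2 ::ₘ (y + 2) / 2 ::ₘ w = (y' + 1) / 2 ::ₘ (y' + 2) / 2 ::ₘ w') :
    y = y' ∧ w = w' := by
  obtain ⟨hfloor, h⟩ := cons_inj_of_forall_le (by grind) (by grind) h
  obtain ⟨hceil, rfl⟩ := cons_inj_of_forall_le (by grind) (by grind) h
  exact ⟨by omega, rfl⟩

theorem lower_injective {x x' : ℕ} {v v' : Multiset ℕ} (hx : 2 ≤ x) (hv : ∀ z ∈ v, x ≤ z)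
    (hx' : 2 ≤ x') (hv' : ∀ z ∈ v', x' ≤ z) (h : (x - 2) ::ₘ v = (x' - 2) ::ₘ v') :
    x = x' ∧ v = v' := by
  obtain ⟨hsub, rfl⟩ := cons_inj_of_forall_le (by grind) (by grind) h
  exact ⟨by omega, rfl⟩

-- The two smallest parts differ by at most one on the left and by at least two on the right.
theorem split_ne_lower {x y : ℕ} {v w : Multiset ℕ} (hw : ∀ z ∈ w, y ≤ z) (hx : 2 ≤ x)
    (hv : ∀ z ∈ v, x ≤ z) :
    (y + 1) / 2 ::ₘ (y + 2) / 2 ::ₘ w ≠ (x - 2) ::ₘ v := by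
  intro h
  obtain ⟨hmin, rfl⟩ := cons_inj_of_forall_le (by grind) (by grind) h
  have hgap : x ≤ (y + 2) / 2 := hv _ (Multiset.mem_cons_self _ w)
  omega

theorem left_unique (h : TradesForTwos k s u) (h' : TradesForTwos k s' u) : s = s' := by
  generalize hu : u = u' at h'
  cases h with
  | threes => cases h'; rw [hu]
  | four => cases h'; rw [hu]
  | split hy hw =>
    cases h' with
    | split hy' hw' =>
      obtain ⟨rfl, rfl⟩ := split_injective (by omega) hw (by omega) hw' hu
      rfl
    | lower hx hv => exact absurd hu (split_ne_lower hw (by omega) hv)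
  | lower hx hv =>
    cases h' with
    | split hy hw => exact absurd hu.symm (split_ne_lower hw (by omega) hv)
    | lower hx' hv' =>
      obtain ⟨rfl, rfl⟩ := lower_injective (by omega) hv (by omega) hv' hu
      rfl

end TradesForTwos

section Counting

open scoped Classical in
/-- The partitions counted by the first term of `gL L N`. -/
noncomputable def smallTwo (L N : ℕ) : Finset N.Partition := {p | InSmall2 L p}

open scoped Classical in
/-- The partitions counted by the second term of `gL L N`. -/
noncomputable def bigThree (L N : ℕ) : Finset N.Partition := {p | InBig3 L p}

/-- The members of `smallTwo L N` with at least four twos. They are kept apart because the twos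
produced by `TradesForTwos` number at most three. -/
noncomputable def manyTwos (L N : ℕ) : Finset N.Partition :=
  {p ∈ smallTwo L N | 3 < p.parts.count 2}

/-- The partitions of `N` into parts from `[3, L + 2]`, whose generating function is
`1 / ((1 - q ^ 3) ⋯ (1 - q ^ (L + 2)))`. -/
def midParts (L N : ℕ) : Finset N.Partition :=
  Nat.Partition.restricted N fun x => 3 ≤ x ∧ x ≤ L + 2

variable {L N : ℕ}

theorem mem_smallTwo {p : N.Partition} : p ∈ smallTwo L N ↔ InSmall2 L p := by
  simp [smallTwo]

theorem mem_bigThree {p : N.Partition} : p ∈ bigThree L N ↔ InBig3 L p := by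
  simp [bigThree]

theorem mem_manyTwos {p : N.Partition} :
    p ∈ manyTwos L N ↔ InSmall2 L p ∧ 3 < p.parts.count 2 := by
  simp [manyTwos, mem_smallTwo]

theorem mem_midParts {p : N.Partition} :
    p ∈ midParts L N ↔ ∀ x ∈ p.parts, 3 ≤ x ∧ x ≤ L + 2 := by
  simp [midParts, Nat.Partition.restricted]

theorem gL_eq_card_sub_card (L N : ℕ) : gL L N = #(smallTwo L N) - #(bigThree L N) := by
  rw [gL, Nat.subtype_card _ fun _ => mem_smallTwo, Nat.subtype_card _ fun _ => mem_bigThree]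

theorem card_bigThree_three_le_one (L : ℕ) : #(bigThree L 3) ≤ 1 := by
  refine card_le_one_iff_subset_singleton.2 ⟨.indiscrete 3, fun p hp => ?_⟩
  obtain ⟨h₀, h₃, -⟩ := mem_bigThree.1 hp
  obtain ⟨x, hx⟩ := Multiset.exists_mem_of_ne_zero h₀
  obtain ⟨t, ht⟩ := Multiset.exists_cons_of_mem hx
  have hsum : x + t.sum = 3 := by rw [← Multiset.sum_cons, ← ht, p.parts_sum]
  have hx₃ : 3 ≤ x := h₃ x hx
  have ht₀ : t = 0 := Multiset.eq_zero_of_forall_notMem fun y hy => by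
    have hy₃ : 3 ≤ y := h₃ y (ht ▸ Multiset.mem_cons_of_mem hy)
    have hyt : y ≤ t.sum := Multiset.le_sum_of_mem hy
    omega
  obtain rfl : x = 3 := by rw [ht₀, Multiset.sum_zero] at hsum; exact hsum
  rw [mem_singleton, Nat.Partition.ext_iff, ht, ht₀, Nat.Partition.indiscrete_parts three_ne_zero]
  rfl

theorem card_bigThree_le_card_midParts (hN : N ≤ L + 2) : #(bigThree L N) ≤ #(midParts L N) := by
  refine card_le_card fun p hp => mem_midParts.2 fun x hx => ⟨(mem_bigThree.1 hp).2.1 x hx, ?_⟩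
  calc
    x ≤ p.parts.sum := Multiset.le_sum_of_mem hx
    _ ≤ L + 2 := p.parts_sum.trans_le hN

theorem card_bigThree_filter_large_le (L n : ℕ) :
    #{p ∈ bigThree L (n + L) | ¬ ∀ x ∈ p.parts, x ≤ L + 2} ≤ #(bigThree L n) := by
  refine card_le_card_of_forall_subsingleton
    (fun p q => ∃ M u, L ≤ M ∧ (∀ x ∈ u, M - L ≤ x) ∧ p.parts = M ::ₘ u ∧ q.parts = (M - L) ::ₘ u)
    (fun p hp => ?_) ?_
  · simp only [mem_filter, mem_bigThree, not_forall, not_le, exists_prop] at hp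
    obtain ⟨⟨h₀, -, hdiff⟩, x, hx, hlarge⟩ := hp
    obtain ⟨M, u, hp, hmax⟩ := exists_eq_cons_forall_ge h₀
    have hsum := p.parts_sum
    rw [hp] at hdiff hsum hx
    have hle : ∀ x ∈ M ::ₘ u, x ≤ M := Multiset.forall_mem_cons.2 ⟨le_rfl, hmax⟩
    have hM : L + 2 < M := hlarge.trans_le (hle x hx)
    have hmin : ∀ x ∈ u, M - L ≤ x := fun x hx =>
      Nat.sub_le_iff_le_add.2 (hdiff M (by simp) x (by simp [hx]))
    have hmem : ∀ x ∈ (M - L) ::ₘ u, M - L ≤ x ∧ x ≤ M :=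
      Multiset.forall_mem_cons.2 ⟨⟨le_rfl, Nat.sub_le M L⟩, fun x hx => ⟨hmin x hx, hmax x hx⟩⟩
    have hthree : ∀ x ∈ (M - L) ::ₘ u, 3 ≤ x := fun x hx =>
      (hmem x hx).1.trans' (by omega)
    refine ⟨⟨(M - L) ::ₘ u, fun hx => three_pos.trans_le (hthree _ hx), ?_⟩,
      mem_bigThree.2 ⟨Multiset.cons_ne_zero, hthree, fun x hx y hy => ?_⟩,
      M, u, by omega, hmin, hp, rfl⟩
    · rw [Multiset.sum_cons] at hsum ⊢
      omega
    · calc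
        x ≤ M := (hmem x hx).2
        _ ≤ y + L := Nat.sub_le_iff_le_add.1 (hmem y hy).1
  · rintro q - p ⟨-, M, u, hLM, hu, hp, hq⟩ p' ⟨-, M', u', hLM', hu', hp', hq'⟩
    obtain ⟨hM, rfl⟩ := cons_inj_of_forall_le hu hu' (hq.symm.trans hq')
    obtain rfl : M = M' := by omega
    exact Nat.Partition.ext (hp.trans hp'.symm)

theorem card_bigThree_add_le (L n : ℕ) :
    #(bigThree L (n + L)) ≤ #(midParts L (n + L)) + #(bigThree L n) := by
  rw [← card_filter_add_card_filter_not fun p => ∀ x ∈ p.parts, x ≤ L + 2]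
  refine Nat.add_le_add (card_le_card fun p hp => ?_) (card_bigThree_filter_large_le L n)
  obtain ⟨hp, hle⟩ := mem_filter.1 hp
  exact mem_midParts.2 fun x hx => ⟨(mem_bigThree.1 hp).2.1 x hx, hle x hx⟩

theorem card_midParts_le (h₀ : N ≠ 0) (h₃ : N ≠ 3) :
    #(midParts L N) ≤ #{q ∈ smallTwo L N | q.parts.count 2 ≤ 3} := by
  refine card_le_card_of_forall_subsingleton
    (fun p q => ∃ k u, 2 ∉ u ∧ TradesForTwos k p.parts u ∧ q.parts = .replicate k 2 + u)
    (fun p hp => ?_) ?_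
  · have hparts := mem_midParts.1 hp
    obtain ⟨k, u, htrade⟩ := exists_tradesForTwos (fun x hx => (hparts x hx).1)
      (fun h => h₀ (by simpa [h] using p.parts_sum.symm))
      (fun h => h₃ (by simpa [h] using p.parts_sum.symm))
    have hu : ∀ x ∈ u, 3 ≤ x := htrade.three_le fun x hx => (hparts x hx).1
    have huL : ∀ x ∈ u, x ≤ L + 2 := htrade.le_of_forall_le fun x hx => (hparts x hx).2
    have htwo : 2 ∉ u := fun h => absurd (hu 2 h) (by norm_num)
    have hmem : ∀ x ∈ Multiset.replicate k 2 + u, 2 ≤ x ∧ x ≤ L + 2 := by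
      intro x hx
      rcases Multiset.mem_add.1 hx with hx | hx
      · obtain rfl := Multiset.eq_of_mem_replicate hx
        omega
      · exact ⟨(hu x hx).trans' (by norm_num), huL x hx⟩
    refine ⟨⟨.replicate k 2 + u, fun hx => two_pos.trans_le (hmem _ hx).1, ?_⟩, ?_,
      k, u, htwo, htrade, rfl⟩
    · simpa [← htrade.sum_eq] using p.parts_sum
    · refine mem_filter.2 ⟨mem_smallTwo.2 ⟨?_, hmem⟩, ?_⟩
      · simp [Multiset.mem_replicate, htrade.pos.ne']
      · simpa [Multiset.count_eq_zero_of_notMem htwo] using htrade.le_three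
  · rintro q - p ⟨-, k, u, hu, htrade, hq⟩ p' ⟨-, k', u', hu', htrade', hq'⟩
    obtain ⟨rfl, rfl⟩ := eq_and_eq_of_replicate_add_eq hu hu' (hq.symm.trans hq')
    exact Nat.Partition.ext (htrade.left_unique htrade')

theorem card_midParts_add_card_manyTwos_le (h₀ : N ≠ 0) (h₃ : N ≠ 3) :
    #(midParts L N) + #(manyTwos L N) ≤ #(smallTwo L N) := by
  calc
    #(midParts L N) + #(manyTwos L N)
      ≤ #{q ∈ smallTwo L N | q.parts.count 2 ≤ 3} + #(manyTwos L N) :=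
        Nat.add_le_add_right (card_midParts_le h₀ h₃) _
    _ = #(smallTwo L N) := by
        simpa only [manyTwos, not_le] using
          card_filter_add_card_filter_not (s := smallTwo L N) fun q => q.parts.count 2 ≤ 3

theorem card_smallTwo_le_card_manyTwos (hL : 8 ≤ L) (n : ℕ) :
    #(smallTwo L n) ≤ #(manyTwos L (n + L)) := by
  refine card_le_card_of_forall_subsingleton
    (fun p q => q.parts = {2, 2, 2, L - 6} + p.parts) (fun p hp => ?_) ?_
  · obtain ⟨htwo, hparts⟩ := mem_smallTwo.1 hp
    have hmem : ∀ x ∈ {2, 2, 2, L - 6} + p.parts, 2 ≤ x ∧ x ≤ L + 2 := by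
      simp only [Multiset.mem_add, Multiset.insert_eq_cons, Multiset.mem_cons,
        Multiset.mem_singleton]
      rintro x (hx | hx)
      · omega
      · exact hparts x hx
    refine ⟨⟨{2, 2, 2, L - 6} + p.parts, fun hx => two_pos.trans_le (hmem _ hx).1, ?_⟩,
      mem_manyTwos.2 ⟨⟨by simp, hmem⟩, ?_⟩, rfl⟩
    · simp only [Multiset.sum_add, Multiset.insert_eq_cons, Multiset.sum_cons,
        Multiset.sum_singleton, p.parts_sum]
      omega
    · have hcount : 0 < p.parts.count 2 := Multiset.count_pos.2 htwo
      simp only [Multiset.count_add, Multiset.insert_eq_cons, Multiset.count_cons_self]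
      omega
  · rintro q - p ⟨-, hp⟩ p' ⟨-, hp'⟩
    exact Nat.Partition.ext (add_left_cancel (hp.symm.trans hp'))

theorem card_manyTwos_pos (hL : 7 ≤ L) :
    0 < #(manyTwos L (3 + L)) := by
  have hmem : ∀ x ∈ ({2, 2, 2, 2, L - 5} : Multiset ℕ), 2 ≤ x ∧ x ≤ L + 2 := by
    simp only [Multiset.insert_eq_cons, Multiset.mem_cons, Multiset.mem_singleton]
    omega
  refine card_pos.2 ⟨⟨{2, 2, 2, 2, L - 5}, fun hx => two_pos.trans_le (hmem _ hx).1, ?_⟩,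
    mem_manyTwos.2 ⟨⟨by simp, hmem⟩, by simp⟩⟩
  simp only [Multiset.insert_eq_cons, Multiset.sum_cons, Multiset.sum_singleton]
  omega

theorem card_bigThree_le_card_smallTwo (hL : 8 ≤ L) (h₀ : N ≠ 0) (h₃ : N ≠ 3) :
    #(bigThree L N) ≤ #(smallTwo L N) := by
  induction N using Nat.strong_induction_on with
  | _ N ih =>
    have hfew := card_midParts_add_card_manyTwos_le (L := L) h₀ h₃
    obtain hN | hN := le_or_gt N (L + 2)
    · exact (card_bigThree_le_card_midParts hN).trans ((Nat.le_add_right _ _).trans hfew)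
    obtain ⟨n, rfl⟩ := Nat.exists_eq_add_of_le' (show L ≤ N by omega)
    suffices h : #(bigThree L n) ≤ #(manyTwos L (n + L)) from
      calc
        #(bigThree L (n + L)) ≤ #(midParts L (n + L)) + #(bigThree L n) := card_bigThree_add_le L n
        _ ≤ #(midParts L (n + L)) + #(manyTwos L (n + L)) :=
          Nat.add_le_add_left h _
        _ ≤ #(smallTwo L (n + L)) := hfew
    obtain rfl | hn₃ := eq_or_ne n 3
    · exact (card_bigThree_three_le_one L).trans (card_manyTwos_pos (by omega))
    · exact (ih n (by omega) (by omega) hn₃).trans (card_smallTwo_le_card_manyTwos hL n)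

end Counting

end BerkovichUncu

open BerkovichUncu in
theorem stmt_13_general (L : ℕ) (hL : 8 ≤ L) :
    (∀ N : ℕ, 0 < N → N ≠ 3 → 0 ≤ gL L N) ∧ -1 ≤ gL L 3 := by
  simp only [gL_eq_card_sub_card]
  refine ⟨fun N h₀ h₃ => ?_, ?_⟩
  · have := card_bigThree_le_card_smallTwo hL h₀.ne' h₃
    omega
  · have := card_bigThree_three_le_one L
    omega

theorem stmt_13 (L : ℕ) (hL : 11 ≤ L) :
    (∀ N : ℕ, 0 < N → N ≠ 3 → 0 ≤ gL L N) ∧ -1 ≤ gL L 3 :=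
  stmt_13_general L (by omega)
end

section
/- Let L be an integer with 5 ≤ L ≤ 10. Then for every positive integer N with N ≠ 3 one has g_L(N) ≥ 0, and g_L(3) ≥ −1. Equivalently, the series G_{L,2}(q) + q^3 has all coefficients nonnegative. -/
/-!
Sorting partitions by their smallest part, the series of those with parts at least `3` and spread
at most `L` telescopes after multiplication by `1 - q ^ L`. With `1 - q ^ (2 L)` divisible both by
`1 - q ^ L` and by `1 - q ^ 2` this gives
`G_L(q) (1 - q ^ (2 L)) = 1 + q ^ L +
  (q ^ 2 + q ^ 4 + ⋯ + q ^ (2 L) - 1 - q ^ L) / ((1 - q ^ 3) ⋯ (1 - q ^ (L + 2)))`.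
The numerator has no negative coefficient beyond `q ^ L`. A division by `1 - q ^ t` preserves
nonnegativity of all coefficients from index `m` on as soon as the `t` coefficients of the quotient
just below index `m` are nonnegative, so only coefficients below `m` have to be computed; for
`5 ≤ L ≤ 10` the bound `m = 24` works in every division.
-/

open PowerSeries Finset

section PartitionSeries

variable (R : Type*) [CommRing R]

/-- The generating function of the partitions all of whose parts lie in `S`, that is,
`∏ s ∈ S, 1 / (1 - X ^ s)` when `0 ∉ S`. -/
noncomputable def partsSeries (S : Finset ℕ) : R⟦X⟧ :=
  mk fun n => (#(Nat.Partition.restricted n (· ∈ S)) : R)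

/-- The generating function of the nonempty partitions whose parts are at least `a` and differ
by at most `L`. -/
noncomputable def spreadSeries (a L : ℕ) : R⟦X⟧ :=
  mk fun n => (Nat.card {p : n.Partition // p.parts ≠ 0 ∧ (∀ x ∈ p.parts, a ≤ x) ∧
    ∀ x ∈ p.parts, ∀ y ∈ p.parts, x ≤ y + L} : R)

lemma card_restricted_filter_mem_parts {S : Finset ℕ} {s n : ℕ} (hs : 0 < s) (hS : s ∈ S)
    (hn : s ≤ n) :
    #{p ∈ Nat.Partition.restricted n (· ∈ S) | s ∈ p.parts} =
      #(Nat.Partition.restricted (n - s) (· ∈ S)) := by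
  let e := Nat.Partition.partitionWithPartEquiv hs hn
  refine card_bij' (fun p hp => e ⟨p, (mem_filter.1 hp).2⟩) (fun p _ => (e.symm p).1)
    ?_ ?_ (fun p hp => by simp) (fun p hp => by simp)
  · intro p hp
    simp only [Nat.Partition.restricted, mem_filter, mem_univ, true_and] at hp ⊢
    intro i hi
    rw [Nat.Partition.partitionWithPartEquiv_apply_parts] at hi
    exact hp.1 i (Multiset.mem_of_mem_erase hi)
  · intro p hp
    simp only [Nat.Partition.restricted, mem_filter, mem_univ, true_and, e,
      Nat.Partition.partitionWithPartEquiv_symm_apply_parts, Multiset.forall_mem_cons] at hp ⊢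
    exact ⟨⟨hS, hp⟩, Multiset.mem_cons_self _ _⟩

lemma coeff_X_pow_mul_partsSeries {S : Finset ℕ} {s : ℕ} (hs : 0 < s) (hS : s ∈ S) (n : ℕ) :
    coeff n (X ^ s * partsSeries R S) =
      (#{p ∈ Nat.Partition.restricted n (· ∈ S) | s ∈ p.parts} : R) := by
  rw [coeff_X_pow_mul']
  split_ifs with hn
  · rw [card_restricted_filter_mem_parts hs hS hn, partsSeries, coeff_mk]
  · rw [filter_false_of_mem fun p _ hp => hn (p.le_of_mem_parts hp), card_empty, Nat.cast_zero]

lemma partsSeries_mul_one_sub_X_pow {S : Finset ℕ} {s : ℕ} (hs : 0 < s) (hS : s ∈ S) :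
    partsSeries R S * (1 - X ^ s) = partsSeries R (S.erase s) := by
  ext n
  have avoiding : {p ∈ Nat.Partition.restricted n (· ∈ S) | s ∉ p.parts} =
      Nat.Partition.restricted n (· ∈ S.erase s) := by
    ext p
    simp only [Nat.Partition.restricted, mem_filter, mem_univ, true_and, mem_erase]
    grind
  rw [mul_sub, mul_one, mul_comm, map_sub, coeff_X_pow_mul_partsSeries R hs hS, sub_eq_iff_eq_add',
    partsSeries, partsSeries, coeff_mk, coeff_mk, ← avoiding, ← Nat.cast_add,
    card_filter_add_card_filter_not]

lemma X_pow_dvd_partsSeries_sub_one {S : Finset ℕ} {b : ℕ} (hS : ∀ i ∈ S, b ≤ i) :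
    X ^ b ∣ partsSeries R S - 1 := by
  refine X_pow_dvd_iff.2 fun n hn => ?_
  rw [map_sub, partsSeries, coeff_mk, coeff_one, sub_eq_zero]
  obtain rfl | hn0 := eq_or_ne n 0
  · simp [Nat.Partition.restricted]
  · rw [if_neg hn0, Nat.Partition.restricted, filter_false_of_mem, card_empty, Nat.cast_zero]
    intro p _ hp
    obtain ⟨i, hi⟩ := Multiset.exists_mem_of_ne_zero (s := p.parts) fun h =>
      hn0 (by simpa [h] using p.parts_sum.symm)
    exact absurd (p.le_of_mem_parts hi) (hn.trans_le (hS i (hp i hi))).not_ge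

lemma partsSeries_empty : partsSeries R ∅ = 1 := by
  ext n
  rw [← sub_eq_zero, ← map_sub]
  exact X_pow_dvd_iff.1 (X_pow_dvd_partsSeries_sub_one R (b := n + 1) (by simp)) n n.lt_succ_self

lemma partsSeries_Icc_mul_one_sub_X_pow_left {a b : ℕ} (ha : 0 < a) (hab : a ≤ b) :
    partsSeries R (Icc a b) * (1 - X ^ a) = partsSeries R (Ico (a + 1) (b + 1)) := by
  rw [partsSeries_mul_one_sub_X_pow R ha (left_mem_Icc.2 hab), Icc_erase_left,
    Ico_add_one_add_one_eq_Ioc]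

lemma partsSeries_Icc_mul_one_sub_X_pow_right {a b : ℕ} (hb : 0 < b) (hab : a ≤ b) :
    partsSeries R (Icc a b) * (1 - X ^ b) = partsSeries R (Ico a b) := by
  rw [partsSeries_mul_one_sub_X_pow R hb (right_mem_Icc.2 hab), Icc_erase_right]

lemma spreadSeries_eq_add {a : ℕ} (ha : 0 < a) (L : ℕ) :
    spreadSeries R a L = X ^ a * partsSeries R (Icc a (a + L)) + spreadSeries R (a + 1) L := by
  classical
  ext n
  rw [map_add, coeff_X_pow_mul_partsSeries R ha (left_mem_Icc.2 (a.le_add_right L)), spreadSeries,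
    spreadSeries, coeff_mk, coeff_mk, ← Nat.cast_add]
  simp only [Nat.card_eq_fintype_card, Fintype.card_subtype]
  rw [← card_filter_add_card_filter_not (fun p : n.Partition => a ∈ p.parts)]
  congr 3 <;> ext p <;>
    simp only [Nat.Partition.restricted, mem_filter, mem_univ, true_and, mem_Icc]
  · constructor
    · rintro ⟨⟨-, h_ge, h_spread⟩, h_mem⟩
      exact ⟨fun x hx => ⟨h_ge x hx, h_spread x hx a h_mem⟩, h_mem⟩
    · rintro ⟨h_Icc, h_mem⟩
      refine ⟨⟨fun h => by simp [h] at h_mem, fun x hx => (h_Icc x hx).1, fun x hx y hy => ?_⟩,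
        h_mem⟩
      have := h_Icc x hx
      have := h_Icc y hy
      lia
  · grind

lemma X_pow_dvd_spreadSeries (a L : ℕ) : X ^ a ∣ spreadSeries R a L := by
  refine X_pow_dvd_iff.2 fun n hn => ?_
  have : IsEmpty {p : n.Partition // p.parts ≠ 0 ∧ (∀ x ∈ p.parts, a ≤ x) ∧
      ∀ x ∈ p.parts, ∀ y ∈ p.parts, x ≤ y + L} := by
    refine ⟨fun ⟨p, h0, h_ge, _⟩ => ?_⟩
    obtain ⟨i, hi⟩ := Multiset.exists_mem_of_ne_zero h0
    exact absurd (p.le_of_mem_parts hi) (hn.trans_le (h_ge i hi)).not_ge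
  rw [spreadSeries, coeff_mk, Nat.card_of_isEmpty, Nat.cast_zero]

lemma spreadSeries_mul_one_sub_X_pow {a : ℕ} (ha : 0 < a) (L : ℕ) :
    spreadSeries R a L * (1 - X ^ L) = partsSeries R (Ico a (a + L)) - 1 := by
  -- The defect `D b` does not depend on `b`, yet `X ^ b` divides it, so it vanishes.
  let D (b : ℕ) : R⟦X⟧ := spreadSeries R b L * (1 - X ^ L) - (partsSeries R (Ico b (b + L)) - 1)
  have D_succ (b : ℕ) (hb : 0 < b) : D (b + 1) = D b := by
    have h_left := partsSeries_Icc_mul_one_sub_X_pow_left R hb (b.le_add_right L)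
    have h_right :=
      partsSeries_Icc_mul_one_sub_X_pow_right R (hb.trans_le (b.le_add_right L)) (b.le_add_right L)
    simp only [D]
    rw [spreadSeries_eq_add R hb L, add_right_comm b 1 L, ← h_left, ← h_right, pow_add]
    ring
  have D_add (k : ℕ) : D (a + k) = D a := by
    induction k with
    | zero => rfl
    | succ k ih => rw [← ih, ← D_succ (a + k) (by lia), add_assoc]
  have X_pow_dvd_D (b : ℕ) : X ^ b ∣ D b :=
    ((X_pow_dvd_spreadSeries R b L).mul_right _).sub
      (X_pow_dvd_partsSeries_sub_one R fun i hi => (mem_Ico.1 hi).1)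
  rw [← sub_eq_zero]
  ext n
  exact X_pow_dvd_iff.1 (D_add (n + 1) ▸ X_pow_dvd_D (a + (n + 1))) n (by lia)

end PartitionSeries

section DivisionByOneSubPow

variable {R : Type*} [Ring R]

lemma coeff_mul_one_sub_X_pow (F : R⟦X⟧) (t n : ℕ) :
    coeff n (F * (1 - X ^ t)) = coeff n F - if t ≤ n then coeff (n - t) F else 0 := by
  rw [mul_sub, mul_one, map_sub, coeff_mul_X_pow']

lemma filter_range_mod_eq_insert {t n : ℕ} (ht : 0 < t) (htn : t ≤ n) :
    {i ∈ range (n + 1) | i % t = n % t} =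
      insert n {i ∈ range (n - t + 1) | i % t = (n - t) % t} := by
  ext i
  simp only [mem_insert, mem_filter, mem_range, ← Nat.mod_eq_sub_mod htn]
  constructor
  · rintro ⟨h_le, h_mod⟩
    obtain rfl | h_lt := (Nat.lt_succ_iff.1 h_le).eq_or_lt
    · exact .inl rfl
    · have : i + t ≤ n := Nat.ModEq.add_le_of_lt h_mod h_lt
      exact .inr ⟨by lia, h_mod⟩
  · rintro (rfl | ⟨h_le, h_mod⟩)
    · exact ⟨by lia, rfl⟩
    · exact ⟨by lia, h_mod⟩

lemma coeff_eq_sum_coeff_mul_one_sub_X_pow (F : R⟦X⟧) {t : ℕ} (ht : 0 < t) (n : ℕ) :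
    coeff n F = ∑ i ∈ range (n + 1) with i % t = n % t, coeff i (F * (1 - X ^ t)) := by
  induction n using Nat.strong_induction_on with
  | _ n ih =>
    obtain hnt | htn := lt_or_ge n t
    · have h_filter : {i ∈ range (n + 1) | i % t = n % t} = {n} := by
        ext i
        simp only [mem_filter, mem_range, mem_singleton]
        constructor
        · rintro ⟨h_le, h_mod⟩
          rwa [Nat.mod_eq_of_lt hnt, Nat.mod_eq_of_lt (by lia)] at h_mod
        · rintro rfl
          exact ⟨by lia, rfl⟩
      rw [h_filter, sum_singleton, coeff_mul_one_sub_X_pow, if_neg hnt.not_ge, sub_zero]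
    · have h_notMem : n ∉ {i ∈ range (n - t + 1) | i % t = (n - t) % t} := by
        simp only [mem_filter, mem_range]
        lia
      rw [filter_range_mod_eq_insert ht htn, sum_insert h_notMem, ← ih (n - t) (by lia),
        coeff_mul_one_sub_X_pow, if_pos htn, sub_add_cancel]

lemma coeff_nonneg_of_coeff_mul_one_sub_X_pow_nonneg [PartialOrder R] [IsOrderedAddMonoid R]
    {F : R⟦X⟧} {t m : ℕ} (ht : 0 < t) (h_mul : ∀ n, m ≤ n → 0 ≤ coeff n (F * (1 - X ^ t)))
    (h_window : ∀ n < m, m ≤ n + t → 0 ≤ coeff n F) (n : ℕ) (hn : m ≤ n) : 0 ≤ coeff n F := by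
  induction n using Nat.strong_induction_on with
  | _ n ih =>
    have h_step := h_mul n hn
    rw [coeff_mul_one_sub_X_pow, sub_nonneg] at h_step
    refine le_trans ?_ h_step
    split_ifs with htn
    · obtain h | h := le_or_gt m (n - t)
      · exact ih _ (by lia) h
      · exact h_window _ h (by lia)
    · exact le_rfl

end DivisionByOneSubPow

section GLSeries

/-- The numerator of `G_L(q) (1 - q ^ (2 L)) - 1 - q ^ L` over the denominator
`(1 - q ^ 3) ⋯ (1 - q ^ (L + 2))`. -/
noncomputable def gLNumerator (L : ℕ) : ℤ⟦X⟧ := ∑ j ∈ range L, X ^ (2 * (j + 1)) - 1 - X ^ L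

/-- The coefficient of `q ^ n` in `gLNumerator L / ((1 - q ^ 3) ⋯ (1 - q ^ (k + 2)))`, in a form
that can be evaluated. The sum runs over the index `i` itself, not over `(n - i) / (k + 3)`, so
that the kernel meets the same terms `quotientCoeff L k i` again and evaluates each of them once. -/
def quotientCoeff (L : ℕ) : ℕ → ℕ → ℤ
  | 0, n => (if n ≠ 0 ∧ n ≤ 2 * L ∧ n % 2 = 0 then 1 else 0) - (if n = 0 then 1 else 0)
      - (if n = L then 1 else 0)
  | k + 1, n => ∑ i ∈ range (n + 1) with i % (k + 3) = n % (k + 3), quotientCoeff L k i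

lemma mk_gL_eq (L : ℕ) :
    mk (gL L) = X ^ 2 * partsSeries ℤ (Icc 2 (L + 2)) - spreadSeries ℤ 3 L := by
  classical
  ext n
  rw [map_sub, coeff_X_pow_mul_partsSeries ℤ two_pos (by simp), spreadSeries, coeff_mk, coeff_mk,
    gL, Nat.card_eq_fintype_card (α := {p : n.Partition // InSmall2 L p}), Fintype.card_subtype]
  congr 3
  ext p
  simp only [InSmall2, Nat.Partition.restricted, mem_filter, mem_univ, true_and, mem_Icc, and_comm]

theorem mk_gL_mul_one_sub_X_pow (L : ℕ) :
    mk (gL L) * (1 - X ^ (2 * L)) =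
      gLNumerator L * partsSeries ℤ (Ico 3 (L + 3)) + 1 + X ^ L := by
  have h_small := partsSeries_Icc_mul_one_sub_X_pow_left ℤ two_pos (Nat.le_add_left 2 L)
  have h_big := spreadSeries_mul_one_sub_X_pow ℤ three_pos L
  have h_geom : (∑ j ∈ range L, (X ^ 2) ^ j) * (1 - X ^ 2 : ℤ⟦X⟧) = 1 - (X ^ 2) ^ L :=
    geom_sum_mul_neg _ _
  have h_sum : ∑ j ∈ range L, (X : ℤ⟦X⟧) ^ (2 * (j + 1)) = X ^ 2 * ∑ j ∈ range L, (X ^ 2) ^ j := by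
    rw [mul_sum]
    exact sum_congr rfl fun j _ => by ring
  rw [add_comm 3 L] at h_big
  rw [mk_gL_eq, gLNumerator, h_sum, pow_mul]
  linear_combination
    X ^ 2 * (∑ j ∈ range L, (X ^ 2) ^ j) * h_small - (1 + X ^ L) * h_big
      - X ^ 2 * partsSeries ℤ (Icc 2 (L + 2)) * h_geom

lemma coeff_gLNumerator (L n : ℕ) : coeff n (gLNumerator L) = quotientCoeff L 0 n := by
  have h_sum : ∑ j ∈ range L, (if n = 2 * (j + 1) then 1 else 0 : ℤ) =
      if n ≠ 0 ∧ n ≤ 2 * L ∧ n % 2 = 0 then 1 else 0 := by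
    have h_iff (j : ℕ) : n = 2 * (j + 1) ↔ n / 2 - 1 = j ∧ n ≠ 0 ∧ n % 2 = 0 := by lia
    simp only [h_iff, ite_and, sum_ite_eq, mem_range]
    split_ifs <;> first | rfl | lia
  simp only [gLNumerator, quotientCoeff, map_sub, map_sum, coeff_X_pow, coeff_one, h_sum]

lemma gLNumerator_mul_partsSeries_mul_one_sub_X_pow (L k : ℕ) :
    gLNumerator L * partsSeries ℤ (Ico 3 (k + 1 + 3)) * (1 - X ^ (k + 3)) =
      gLNumerator L * partsSeries ℤ (Ico 3 (k + 3)) := by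
  rw [mul_assoc, add_right_comm k 1 3, Ico_add_one_right_eq_Icc,
    partsSeries_Icc_mul_one_sub_X_pow_right ℤ (by lia) (by lia)]

lemma coeff_gLNumerator_mul_partsSeries (L k n : ℕ) :
    coeff n (gLNumerator L * partsSeries ℤ (Ico 3 (k + 3))) = quotientCoeff L k n := by
  induction k generalizing n with
  | zero => rw [zero_add, Ico_self, partsSeries_empty, mul_one, coeff_gLNumerator]
  | succ k ih =>
    rw [coeff_eq_sum_coeff_mul_one_sub_X_pow _ (by lia : 0 < k + 3),
      gLNumerator_mul_partsSeries_mul_one_sub_X_pow]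
    simp only [ih, quotientCoeff]

lemma coeff_mk_gL_mul_one_sub_X_pow (L n : ℕ) :
    coeff n (mk (gL L) * (1 - X ^ (2 * L))) =
      quotientCoeff L L n + (if n = 0 then 1 else 0) + (if n = L then 1 else 0) := by
  rw [mk_gL_mul_one_sub_X_pow, map_add, map_add, coeff_gLNumerator_mul_partsSeries, coeff_one,
    coeff_X_pow]

lemma gL_eq_sum_quotientCoeff {L : ℕ} (hL : 0 < L) (N : ℕ) :
    gL L N = ∑ i ∈ range (N + 1) with i % (2 * L) = N % (2 * L),
      (quotientCoeff L L i + (if i = 0 then 1 else 0) + (if i = L then 1 else 0)) := by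
  rw [← coeff_mk N (gL L), coeff_eq_sum_coeff_mul_one_sub_X_pow _ (by lia : 0 < 2 * L)]
  simp only [coeff_mk_gL_mul_one_sub_X_pow]

end GLSeries

section Positivity

-- The bound `24` is `2 * 10 + 4`: in the last division, by `1 - X ^ (2 * L)`, the window of
-- coefficients below it must not reach the negative one at exponent `3`.
lemma quotientCoeff_nonneg_of_window : ∀ L ∈ Icc 5 10, ∀ k < L, ∀ n < 24, 24 ≤ n + (k + 3) →
    0 ≤ quotientCoeff L (k + 1) n := by
  decide +kernel

lemma quotientCoeff_nonneg {L : ℕ} (hL : L ∈ Icc 5 10) {k : ℕ} (hk : k ≤ L) (n : ℕ) (hn : 24 ≤ n) :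
    0 ≤ quotientCoeff L k n := by
  induction k generalizing n with
  | zero =>
    have := mem_Icc.1 hL
    simp only [quotientCoeff]
    split_ifs <;> lia
  | succ k ih =>
    rw [← coeff_gLNumerator_mul_partsSeries]
    refine coeff_nonneg_of_coeff_mul_one_sub_X_pow_nonneg (by lia : 0 < k + 3) (fun m hm => ?_)
      (fun m hm h_window => ?_) n hn
    · rw [gLNumerator_mul_partsSeries_mul_one_sub_X_pow, coeff_gLNumerator_mul_partsSeries]
      exact ih (by lia) m hm
    · rw [coeff_gLNumerator_mul_partsSeries]
      exact quotientCoeff_nonneg_of_window L hL k hk m hm h_window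

lemma gL_ge_of_lt {L : ℕ} (hL : L ∈ Icc 5 10) {N : ℕ} (hN : N < 24) :
    (if N = 3 then -1 else 0) ≤ gL L N := by
  have h_sum : ∀ L ∈ Icc 5 10, ∀ N < 24, (if N = 3 then -1 else 0) ≤
      ∑ i ∈ range (N + 1) with i % (2 * L) = N % (2 * L),
        (quotientCoeff L L i + (if i = 0 then 1 else 0) + (if i = L then 1 else 0)) := by
    decide +kernel
  rw [gL_eq_sum_quotientCoeff (lt_of_lt_of_le (by lia) (mem_Icc.1 hL).1)]
  exact h_sum L hL N hN

lemma gL_nonneg_of_ge {L : ℕ} (hL : L ∈ Icc 5 10) {N : ℕ} (hN : 24 ≤ N) : 0 ≤ gL L N := by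
  have hL' := mem_Icc.1 hL
  rw [← coeff_mk N (gL L)]
  refine coeff_nonneg_of_coeff_mul_one_sub_X_pow_nonneg (by lia : 0 < 2 * L) (fun n hn => ?_)
    (fun n hn h_window => ?_) N hN
  · rw [coeff_mk_gL_mul_one_sub_X_pow]
    have := quotientCoeff_nonneg hL le_rfl n hn
    split_ifs <;> lia
  · rw [coeff_mk]
    simpa [show n ≠ 3 by lia] using gL_ge_of_lt hL hn

end Positivity

theorem stmt_14 (L : ℕ) (hL1 : 5 ≤ L) (hL2 : L ≤ 10) :
    (∀ N : ℕ, 0 < N → N ≠ 3 → 0 ≤ gL L N) ∧ -1 ≤ gL L 3 := by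
  have hL : L ∈ Icc 5 10 := mem_Icc.2 ⟨hL1, hL2⟩
  refine ⟨fun N _ hN3 => ?_, gL_ge_of_lt hL (N := 3) (by lia)⟩
  obtain hN | hN := lt_or_ge N 24
  · simpa [hN3] using gL_ge_of_lt hL hN
  · exact gL_nonneg_of_ge hL hN
end

section
/- For L = 3: for every positive integer N with N ∉ {3, 9, 15} one has g_3(N) ≥ 0, and g_3(3) ≥ −1, g_3(9) ≥ −1, g_3(15) ≥ −1. Equivalently, the series G_{3,2}(q) + q^3 + q^9 + q^{15} has all coefficients nonnegative. -/
open Finset (range)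

@[elab_as_elim]
theorem residue_induction {motive : ℕ → Prop} {d : ℕ} (hd : 0 < d) (base : ∀ r < d, motive r)
    (step : ∀ n, motive n → motive (n + d)) (n : ℕ) : motive n := by
  induction n using Nat.strong_induction_on with
  | _ n ih =>
    obtain h | h := Nat.lt_or_ge n d
    · exact base n h
    · simpa only [Nat.sub_add_cancel h] using step (n - d) (ih (n - d) (by omega))

section Denumerant

variable {s : Set ℕ} {m n : ℕ}

/-- The partitions of `n` all of whose parts lie in `s`. -/
def partitionsIn (s : Set ℕ) (n : ℕ) : Set n.Partition := {p | ∀ x ∈ p.parts, x ∈ s}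

/-- Sylvester's denumerant: the number of partitions of `n` with all parts in `s`. -/
noncomputable def denumerant (s : Set ℕ) (n : ℕ) : ℕ := (partitionsIn s n).ncard

/-- The number of partitions of `n` with all parts in `s` that use the part `m`. -/
noncomputable def denumerantWith (s : Set ℕ) (m n : ℕ) : ℕ :=
  (partitionsIn s n ∩ {p | m ∈ p.parts}).ncard

theorem denumerantWith_of_lt (h : n < m) : denumerantWith s m n = 0 := by
  rw [denumerantWith, Set.ncard_eq_zero, Set.eq_empty_iff_forall_notMem]
  exact fun p hp => (Nat.Partition.le_of_mem_parts hp.2).not_gt h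

theorem denumerantWith_add (hm : 0 < m) (hms : m ∈ s) (n : ℕ) :
    denumerantWith s m (n + m) = denumerant s n := by
  suffices h : denumerantWith s m (n + m) = denumerant s (n + m - m) by
    rwa [Nat.add_sub_cancel] at h
  let e := Nat.Partition.partitionWithPartEquiv hm (Nat.le_add_left m n)
  have image_insert : (Subtype.val ∘ e.symm) '' partitionsIn s (n + m - m) =
      partitionsIn s (n + m) ∩ {p | m ∈ p.parts} := by
    ext p
    constructor
    · rintro ⟨q, hq, rfl⟩
      refine ⟨fun x hx => ?_, (e.symm q).2⟩
      rw [Function.comp_apply, Nat.Partition.partitionWithPartEquiv_symm_apply_parts,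
        Multiset.mem_cons] at hx
      exact hx.elim (fun h => h ▸ hms) (hq x)
    · rintro ⟨hps, hmp⟩
      refine ⟨e ⟨p, hmp⟩, fun x hx => hps x ?_, by simp⟩
      rw [Nat.Partition.partitionWithPartEquiv_apply_parts] at hx
      exact Multiset.mem_of_mem_erase hx
  rw [denumerantWith, ← image_insert, denumerant,
    Set.ncard_image_of_injective _ (Subtype.val_injective.comp e.symm.injective)]

theorem denumerantWith_add_add {k : ℕ} (hm : 0 < m) (hms : m ∈ s) (hmks : m + k ∈ s) (n : ℕ) :
    denumerantWith s (m + k) (n + k) = denumerantWith s m n := by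
  obtain h | h := Nat.lt_or_ge n m
  · rw [denumerantWith_of_lt h, denumerantWith_of_lt (by omega)]
  · obtain ⟨i, rfl⟩ := Nat.exists_eq_add_of_le' h
    rw [add_assoc, denumerantWith_add (by omega) hmks, denumerantWith_add hm hms]

theorem denumerantWith_add_denumerant_sdiff (s : Set ℕ) (m n : ℕ) :
    denumerantWith s m n + denumerant (s \ {m}) n = denumerant s n := by
  have avoid : partitionsIn s n \ {p | m ∈ p.parts} = partitionsIn (s \ {m}) n := by
    ext p
    simp only [partitionsIn, Set.mem_sdiff, Set.mem_ofPred_eq, Set.mem_singleton_iff]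
    grind
  rw [denumerantWith, denumerant, ← avoid, Set.ncard_inter_add_ncard_sdiff_eq_ncard, denumerant]

theorem denumerant_add (hm : 0 < m) (hms : m ∈ s) (n : ℕ) :
    denumerant s (n + m) = denumerant s n + denumerant (s \ {m}) (n + m) := by
  rw [← denumerantWith_add_denumerant_sdiff s m, denumerantWith_add hm hms]

theorem denumerant_sdiff_of_lt (h : n < m) : denumerant (s \ {m}) n = denumerant s n := by
  rw [← denumerantWith_add_denumerant_sdiff s m, denumerantWith_of_lt h, zero_add]

theorem denumerant_of_forall_lt (h : ∀ x ∈ s, n < x) :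
    denumerant s n = if n = 0 then 1 else 0 := by
  rw [denumerant]
  split_ifs with hn
  · subst hn
    rw [Set.ncard_eq_one]
    exact ⟨default, Set.eq_singleton_iff_unique_mem.2
      ⟨by simp [partitionsIn], fun _ _ => Subsingleton.elim _ _⟩⟩
  · rw [Set.ncard_eq_zero, Set.eq_empty_iff_forall_notMem]
    intro p hp
    obtain ⟨x, hx⟩ := Multiset.exists_mem_of_ne_zero
      (fun h0 => hn (by rw [← p.parts_sum, h0, Multiset.sum_zero]) : p.parts ≠ 0)
    exact (Nat.Partition.le_of_mem_parts hx).not_gt (h x (hp x hx))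

theorem denumerant_insert (hm : 0 < m) (hms : m ∉ s) (n : ℕ) :
    denumerant (insert m s) n = ∑ k ∈ range (n / m + 1), denumerant s (n - k * m) := by
  have sdiff_eq : insert m s \ {m} = s := Set.insert_sdiff_self_of_notMem hms
  induction n using residue_induction hm with
  | base r hr =>
    rw [← denumerant_sdiff_of_lt hr, sdiff_eq, Nat.div_eq_of_lt hr]
    simp
  | step n ih =>
    rw [denumerant_add hm (Set.mem_insert m s), sdiff_eq, ih, Nat.add_div_right n hm,
      Finset.sum_range_succ' _ (n / m + 1)]
    simp only [add_mul, one_mul, Nat.add_sub_add_right, zero_mul, Nat.sub_zero]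

theorem denumerant_singleton (hm : 0 < m) (n : ℕ) :
    denumerant {m} n = if m ∣ n then 1 else 0 := by
  induction n using residue_induction hm with
  | base r hr =>
    have forall_lt : ∀ x ∈ ({m} : Set ℕ), r < x := by simpa using hr
    simp only [denumerant_of_forall_lt forall_lt, Nat.dvd_iff_mod_eq_zero, Nat.mod_eq_of_lt hr]
  | step n ih =>
    rw [denumerant_add hm (Set.mem_singleton m), ih, sdiff_self, Set.bot_eq_empty,
      denumerant_of_forall_lt (by simp), if_neg (by omega : n + m ≠ 0), add_zero]
    simp only [Nat.dvd_add_self_right]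

theorem denumerant_pair_add_mul {a b : ℕ} (ha : 0 < a) (hb : 0 < b) (hab : a ≠ b) (n k : ℕ) :
    denumerant {a, b} (n + k * a) =
      denumerant {a, b} n + ∑ j ∈ range k, if b ∣ n + (j + 1) * a then 1 else 0 := by
  have sdiff_eq : ({a, b} : Set ℕ) \ {a} = {b} :=
    Set.insert_sdiff_self_of_notMem (by simpa using hab)
  induction k with
  | zero => simp
  | succ k ih =>
    rw [Finset.sum_range_succ, ← add_assoc, ← ih, add_one_mul, ← add_assoc,
      denumerant_add ha (by simp), sdiff_eq, denumerant_singleton hb]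

/-- A kernel-computable form of `denumerant`: the number of ways to write `n` as a sum of
multiples of the members of the list. -/
def listDenumerant : List ℕ → ℕ → ℕ
  | [], n => if n = 0 then 1 else 0
  | m :: l, n => ∑ k ∈ range (n / m + 1), listDenumerant l (n - k * m)

theorem denumerant_eq_listDenumerant {l : List ℕ} (hl : l.Nodup) (hpos : ∀ x ∈ l, 0 < x)
    (hs : ∀ x, x ∈ s ↔ x ∈ l) (n : ℕ) : denumerant s n = listDenumerant l n := by
  induction l generalizing s n with
  | nil => exact denumerant_of_forall_lt fun x hx => absurd ((hs x).1 hx) List.not_mem_nil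
  | cons m l ih =>
    rw [List.nodup_cons] at hl
    rw [List.forall_mem_cons] at hpos
    have cons_eq : s = insert m {x | x ∈ l} := by
      ext x
      rw [hs x, List.mem_cons, Set.mem_insert_iff, Set.mem_ofPred_eq]
    rw [cons_eq, denumerant_insert hpos.1 hl.1, listDenumerant]
    exact Finset.sum_congr rfl fun k _ => ih hl.2 hpos.2 (fun _ => Iff.rfl) _

end Denumerant

section NarrowPartitions

/-- The nonempty partitions of `n` with smallest part at least `m` and largest part minus smallest
part at most `L`; these are the partitions satisfying `InBig3 L` when `m = 3`. -/
def narrowPartitions (L m n : ℕ) : Set n.Partition :=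
  {p | p.parts ≠ 0 ∧ (∀ x ∈ p.parts, m ≤ x) ∧ ∀ x ∈ p.parts, ∀ y ∈ p.parts, x ≤ y + L}

theorem narrowPartitions_of_lt {L m n : ℕ} (h : n < m) : narrowPartitions L m n = ∅ := by
  refine Set.eq_empty_iff_forall_notMem.2 fun p ⟨hp, hmin, _⟩ => ?_
  obtain ⟨x, hx⟩ := Multiset.exists_mem_of_ne_zero hp
  exact h.not_ge ((hmin x hx).trans (Nat.Partition.le_of_mem_parts hx))

theorem ncard_narrowPartitions (L m n : ℕ) :
    (narrowPartitions L m n).ncard =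
      denumerantWith (Set.Icc m (m + L)) m n + (narrowPartitions L (m + 1) n).ncard := by
  have smallest_eq : narrowPartitions L m n ∩ {p | m ∈ p.parts} =
      partitionsIn (Set.Icc m (m + L)) n ∩ {p | m ∈ p.parts} := by
    ext p
    simp only [narrowPartitions, partitionsIn, Set.mem_inter_iff, Set.mem_ofPred_eq, Set.mem_Icc]
    constructor
    · rintro ⟨⟨_, hmin, hspread⟩, hm⟩
      exact ⟨fun x hx => ⟨hmin x hx, hspread x hx m hm⟩, hm⟩
    · rintro ⟨hp, hm⟩
      refine ⟨⟨fun h0 => by simp [h0] at hm, fun x hx => (hp x hx).1, fun x hx y hy => ?_⟩, hm⟩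
      exact (hp x hx).2.trans (Nat.add_le_add_right (hp y hy).1 L)
  have smallest_gt : narrowPartitions L m n \ {p | m ∈ p.parts} = narrowPartitions L (m + 1) n := by
    ext p
    simp only [narrowPartitions, Set.mem_sdiff, Set.mem_ofPred_eq]
    grind
  rw [← Set.ncard_inter_add_ncard_sdiff_eq_ncard _ {p | m ∈ p.parts}, smallest_eq, smallest_gt,
    denumerantWith]

-- Trading a smallest part `m` for `m + L` matches the partitions of `n` and of `n + L` with parts
-- in `[m, m + L]`, so only partitions avoiding `m` or `m + L` remain, and these telescope in `m`.
theorem ncard_narrowPartitions_add {L m : ℕ} (hL : 0 < L) (hm : 0 < m) (n : ℕ) :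
    (narrowPartitions L m (n + L)).ncard =
      (narrowPartitions L m n).ncard + denumerant (Set.Ico m (m + L)) (n + L) := by
  obtain hlt | _ := Nat.lt_or_ge (n + L) m
  · rw [narrowPartitions_of_lt hlt, narrowPartitions_of_lt (by omega),
      denumerant_of_forall_lt fun x hx => hlt.trans_le hx.1, if_neg (by omega),
      Set.ncard_empty, Set.ncard_empty]
  · have ih := ncard_narrowPartitions_add hL m.succ_pos n
    have trade : denumerantWith (Set.Icc m (m + L)) (m + L) (n + L) =
        denumerantWith (Set.Icc m (m + L)) m n :=
      denumerantWith_add_add hm (by simp) (by simp) n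
    have avoid_smallest :=
      denumerantWith_add_denumerant_sdiff (Set.Icc m (m + L)) m (n + L)
    have avoid_largest :=
      denumerantWith_add_denumerant_sdiff (Set.Icc m (m + L)) (m + L) (n + L)
    have shift : Set.Ico (m + 1) (m + 1 + L) = Set.Ioc m (m + L) := by ext; simp; omega
    rw [Set.Icc_sdiff_left] at avoid_smallest
    rw [Set.Icc_sdiff_right] at avoid_largest
    rw [Nat.succ_eq_add_one, shift] at ih
    rw [ncard_narrowPartitions L m (n + L), ncard_narrowPartitions L m n]
    omega
termination_by n + L + 1 - m

end NarrowPartitions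

section Recurrence

variable {L : ℕ}

theorem gL_eq (L N : ℕ) :
    gL L N = denumerantWith (Set.Icc 2 (L + 2)) 2 N - (narrowPartitions L 3 N).ncard := by
  have small_eq : {p : N.Partition | InSmall2 L p} =
      partitionsIn (Set.Icc 2 (L + 2)) N ∩ {p | 2 ∈ p.parts} := by
    ext p
    exact and_comm
  rw [denumerantWith, ← small_eq]
  rfl

theorem denumerantWith_two_add (hL : 2 ≤ L) (N : ℕ) :
    denumerantWith (Set.Icc 2 (L + 2)) 2 (N + L) =
      denumerantWith (Set.Icc 2 (L + 2)) 2 N +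
        denumerant (Set.Icc 2 (L + 2) \ {L}) (N + (L - 2)) := by
  obtain ⟨k, rfl⟩ := Nat.exists_eq_add_of_le hL
  have trade := denumerantWith_add_add (s := Set.Icc 2 (2 + k + 2)) (k := k) two_pos
    (by simp) (by simp) N
  rw [← trade, Nat.add_sub_cancel_left, denumerantWith_add_denumerant_sdiff, add_comm 2 k,
    ← add_assoc, denumerantWith_add two_pos (by simp)]

theorem gL_add (hL : 2 ≤ L) (N : ℕ) :
    gL L (N + L) = gL L N + denumerant (Set.Icc 2 (L + 2) \ {L}) (N + (L - 2)) -
      denumerant (Set.Ico 3 (3 + L)) (N + L) := by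
  rw [gL_eq, gL_eq, denumerantWith_two_add hL, ncard_narrowPartitions_add (by omega) three_pos]
  push_cast
  ring

theorem gL_of_lt_three {N : ℕ} (hN : N < 3) : gL L N = if N = 2 then 1 else 0 := by
  rw [gL_eq, narrowPartitions_of_lt hN, Set.ncard_empty, Nat.cast_zero, sub_zero]
  split_ifs with h
  · have remove_two := denumerantWith_add two_pos (by simp : 2 ∈ Set.Icc 2 (L + 2)) 0
    rw [zero_add] at remove_two
    rw [h, remove_two, denumerant_of_forall_lt (fun x hx => two_pos.trans_le hx.1), if_pos rfl,
      Nat.cast_one]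
  · rw [denumerantWith_of_lt (by omega), Nat.cast_zero]

theorem gL_three_add (N : ℕ) :
    gL 3 (N + 3) = gL 3 N + denumerant {2, 4, 5} (N + 1) - denumerant {3, 4, 5} (N + 3) := by
  have erase_three : Set.Icc 2 (3 + 2) \ {3} = ({2, 4, 5} : Set ℕ) := by ext; simp; omega
  have Ico_eq : Set.Ico 3 (3 + 3) = ({3, 4, 5} : Set ℕ) := by ext; simp; omega
  rw [gL_add (by norm_num), erase_three, Ico_eq]

end Recurrence

section Inequalities

theorem denumerant_three_four_add_twelve (n : ℕ) :
    denumerant {3, 4} (n + 12) = denumerant {3, 4} n + 1 := by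
  rw [show n + 12 = n + 4 * 3 by rfl, denumerant_pair_add_mul (by simp) (by simp) (by simp)]
  simp only [Finset.sum_range_succ, Finset.sum_range_zero]
  split_ifs <;> omega

theorem denumerant_four_two_add_twelve (n : ℕ) :
    denumerant {4, 2} (n + 12) = denumerant {4, 2} n + if 2 ∣ n then 3 else 0 := by
  rw [show n + 12 = n + 3 * 4 by rfl, denumerant_pair_add_mul (by simp) (by simp) (by simp)]
  simp only [Finset.sum_range_succ, Finset.sum_range_zero]
  split_ifs <;> omega

theorem denumerant_three_four_le_four_two (n : ℕ) :
    denumerant {3, 4} (n + 5) + denumerant {3, 4} (n + 10) ≤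
      denumerant {4, 2} (n + 3) + denumerant {4, 2} (n + 8) := by
  induction n using residue_induction (by norm_num : 0 < 12) with
  | base r hr =>
    simp only [denumerant_eq_listDenumerant (s := {3, 4}) (l := [3, 4]) (by simp) (by simp)
        (by simp),
      denumerant_eq_listDenumerant (s := {4, 2}) (l := [4, 2]) (by simp) (by simp) (by simp)]
    decide +revert +kernel
  | step n ih =>
    rw [add_right_comm n 12 5, add_right_comm n 12 10, add_right_comm n 12 3,
      add_right_comm n 12 8]
    simp only [denumerant_three_four_add_twelve, denumerant_four_two_add_twelve]
    split_ifs <;> omega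

theorem denumerant_three_four_five_le_two_four_five (n : ℕ) :
    denumerant {3, 4, 5} (n + 16) ≤ denumerant {2, 4, 5} (n + 14) := by
  induction n using residue_induction (by norm_num : 0 < 10) with
  | base r hr =>
    rw [denumerant_eq_listDenumerant (l := [3, 4, 5]) (by simp) (by simp) (by simp),
      denumerant_eq_listDenumerant (l := [2, 4, 5]) (by simp) (by simp) (by simp)]
    decide +revert +kernel
  | step n ih =>
    have sdiff_five_left : ({3, 4, 5} : Set ℕ) \ {5} = {3, 4} := by ext; simp; omega
    have sdiff_five_right : ({2, 4, 5} : Set ℕ) \ {5} = {4, 2} := by ext; simp; omega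
    have left_step (k : ℕ) := denumerant_add (s := {3, 4, 5}) (m := 5) (by simp) (by simp) k
    have right_step (k : ℕ) := denumerant_add (s := {2, 4, 5}) (m := 5) (by simp) (by simp) k
    rw [sdiff_five_left] at left_step
    rw [sdiff_five_right] at right_step
    calc
      denumerant {3, 4, 5} (n + 10 + 16)
      _ = denumerant {3, 4, 5} (n + 16) +
            (denumerant {3, 4} (n + 16 + 5) + denumerant {3, 4} (n + 16 + 10)) := by
          rw [add_right_comm n 10 16, ← add_assoc, ← left_step, ← left_step]
      _ ≤ denumerant {2, 4, 5} (n + 14) +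
            (denumerant {4, 2} (n + 16 + 3) + denumerant {4, 2} (n + 16 + 8)) :=
          Nat.add_le_add ih (denumerant_three_four_le_four_two (n + 16))
      _ = denumerant {2, 4, 5} (n + 10 + 14) := by
          rw [add_right_comm n 10 14, ← add_assoc, ← right_step, ← right_step]

end Inequalities

theorem gL_three_eq_sum (N : ℕ) :
    gL 3 N = (if N % 3 = 2 then 1 else 0) + ∑ k ∈ range (N / 3),
      ((listDenumerant [2, 4, 5] (N % 3 + 3 * k + 1) : ℤ) -
        listDenumerant [3, 4, 5] (N % 3 + 3 * k + 3)) := by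
  induction N using residue_induction three_pos with
  | base r hr => simp [gL_of_lt_three hr, Nat.mod_eq_of_lt hr, Nat.div_eq_of_lt hr]
  | step N ih =>
    rw [gL_three_add, ih, Nat.add_mod_right, Nat.add_div_right N three_pos, Finset.sum_range_succ,
      Nat.mod_add_div,
      denumerant_eq_listDenumerant (l := [2, 4, 5]) (by simp) (by simp) (by simp),
      denumerant_eq_listDenumerant (l := [3, 4, 5]) (by simp) (by simp) (by simp)]
    ring

theorem gL_three_le_add_three (n : ℕ) : gL 3 (n + 13) ≤ gL 3 (n + 16) := by
  have recurrence : gL 3 (n + 16) =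
      gL 3 (n + 13) + denumerant {2, 4, 5} (n + 14) - denumerant {3, 4, 5} (n + 16) :=
    gL_three_add (n + 13)
  have := denumerant_three_four_five_le_two_four_five n
  omega

theorem gL_three_add_sixteen_nonneg (n : ℕ) : 0 ≤ gL 3 (n + 16) := by
  induction n using residue_induction three_pos with
  | base r hr =>
    rw [gL_three_eq_sum]
    decide +revert +kernel
  | step n ih => exact ih.trans (gL_three_le_add_three (n + 3))

theorem stmt_15 :
    (∀ N : ℕ, 0 < N → N ≠ 3 → N ≠ 9 → N ≠ 15 → 0 ≤ gL 3 N) ∧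
      -1 ≤ gL 3 3 ∧ -1 ≤ gL 3 9 ∧ -1 ≤ gL 3 15 := by
  have nonneg_of_lt : ∀ N < 16, N ≠ 3 → N ≠ 9 → N ≠ 15 → 0 ≤ gL 3 N := by
    simp only [gL_three_eq_sum]
    decide +kernel
  refine ⟨fun N _ h3 h9 h15 => ?_, ?_, ?_, ?_⟩
  · obtain hlt | hle := Nat.lt_or_ge N 16
    · exact nonneg_of_lt N hlt h3 h9 h15
    · simpa only [Nat.sub_add_cancel hle] using gL_three_add_sixteen_nonneg (N - 16)
  all_goals
    rw [gL_three_eq_sum]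
    decide +kernel
end

section
/- For L = 4: for every positive integer N with N ∉ {3, 9} one has g_4(N) ≥ 0, and g_4(3) ≥ −1, g_4(9) ≥ −1. Equivalently, the series G_{4,2}(q) + q^3 + q^9 has all coefficients nonnegative. -/
/-!
Splitting the subtracted partitions by their smallest part `m` writes their generating function as
`∑_{m ≥ 3} q ^ m P[m, m + L]`, where `P[a, b]` generates the partitions with parts in `[a, b]`.
After multiplication by `1 - q ^ L` each summand becomes `P[m, m + L - 1] - P[m + 1, m + L]`, so
the sum telescopes to `P[3, L + 2] - 1`. For `L = 4` this yields
`(1 - q ^ 4) G = (q ^ 4 + q ^ 2 - 1) P[3, 6] + 1`, from which `G + q ^ 3 + q ^ 9` can be rewritten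
as a combination of such generating functions in which no minus sign occurs.
-/

open Finset PowerSeries
open Nat (Partition)

/-- The power series with nonnegative coefficients. -/
def nonnegSeries (R : Type*) [Semiring R] [PartialOrder R] [IsOrderedRing R] :
    Subsemiring R⟦X⟧ where
  carrier := {f | ∀ n, 0 ≤ coeff n f}
  zero_mem' n := by simp
  one_mem' n := by rw [coeff_one]; split_ifs <;> simp
  add_mem' hf hg n := by rw [map_add]; exact add_nonneg (hf n) (hg n)
  mul_mem' hf hg n := by
    rw [coeff_mul]; exact sum_nonneg fun _ _ ↦ mul_nonneg (hf _) (hg _)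

theorem X_mem_nonnegSeries (R : Type*) [Semiring R] [PartialOrder R] [IsOrderedRing R] :
    (X : R⟦X⟧) ∈ nonnegSeries R := fun n ↦ by
  rw [coeff_X]; split_ifs <;> simp

/-- The generating function, in powers of `q = X`, of the partitions all of whose parts lie in the
finite set `S`. -/
noncomputable def partSeries (S : Finset ℕ) : ℤ⟦X⟧ :=
  .mk fun n ↦ #(Partition.restricted n (· ∈ S))

theorem partSeries_mem_nonnegSeries (S : Finset ℕ) : partSeries S ∈ nonnegSeries ℤ := fun n ↦ by
  rw [partSeries, coeff_mk]
  positivity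

open scoped PowerSeries.WithPiTopology in
theorem prod_one_sub_X_pow_mul_partSeries {S : Finset ℕ} (hS : 0 ∉ S) :
    (∏ s ∈ S, (1 - X ^ s)) * partSeries S = 1 := by
  let factor (s : ℕ) : ℤ⟦X⟧ := if s ∈ S then 1 - X ^ s else 1
  have factor_eq_one : ∀ s ∉ S, factor s = 1 := fun s hs ↦ if_neg hs
  have hasProd_factor : HasProd (fun i ↦ factor (i + 1)) (∏ s ∈ S, (1 - X ^ s)) := by
    have hrange : ∀ s ∉ Set.range (· + 1 : ℕ → ℕ), factor s = 1 := by
      rintro (_ | s) hs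
      · exact factor_eq_one 0 hS
      · exact absurd ⟨s, rfl⟩ hs
    rw [← prod_congr rfl fun s hs ↦ (if_pos hs : factor s = _)]
    exact ((add_left_injective 1).hasProd_iff hrange).mpr
      (hasProd_prod_of_ne_finset_one factor_eq_one)
  refine (hasProd_factor.mul
    (Partition.hasProd_powerSeriesMk_card_restricted ℤ (· ∈ S))).unique ?_
  convert! hasProd_one (β := ℕ) (α := ℤ⟦X⟧) using 2 with i
  by_cases hi : i + 1 ∈ S
  · simp only [factor, if_pos hi, pow_mul]
    rw [mul_comm, WithPiTopology.tsum_pow_mul_one_sub_of_constantCoeff_eq_zero (by simp)]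
  · simp only [factor, if_neg hi, mul_one]

theorem one_sub_X_pow_mul_partSeries_insert {s : ℕ} {S : Finset ℕ} (hs : s ∉ S)
    (hS : 0 ∉ insert s S) : (1 - X ^ s) * partSeries (insert s S) = partSeries S := by
  have hinsert := prod_one_sub_X_pow_mul_partSeries hS
  have hself := prod_one_sub_X_pow_mul_partSeries fun h ↦ hS (mem_insert_of_mem h)
  rw [prod_insert hs] at hinsert
  linear_combination
    partSeries S * hinsert - (1 - X ^ s) * partSeries (insert s S) * hself

theorem coeff_X_pow_mul_partSeries {s : ℕ} {T : Finset ℕ} (hs : s ∈ T) (hT : 0 ∉ T) (N : ℕ) :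
    (X ^ s * partSeries T).coeff N =
      (#{p ∈ Partition.restricted N (· ∈ T) | s ∈ p.parts} : ℤ) := by
  have herase : (1 - X ^ s) * partSeries T = partSeries (T.erase s) := by
    rw [← insert_erase hs] at hT
    simpa only [insert_erase hs] using
      one_sub_X_pow_mul_partSeries_insert (notMem_erase s T) hT
  have hsub : X ^ s * partSeries T = partSeries T - partSeries (T.erase s) := by
    linear_combination -herase
  have hnot : Partition.restricted N (· ∈ T.erase s) =
      {p ∈ Partition.restricted N (· ∈ T) | s ∉ p.parts} := by
    ext p
    simp only [Partition.restricted, mem_filter, mem_univ, true_and, mem_erase]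
    grind
  have hcard := card_filter_add_card_filter_not (s := Partition.restricted N (· ∈ T)) (s ∈ ·.parts)
  rw [hsub, map_sub, partSeries, partSeries, coeff_mk, coeff_mk, hnot]
  omega

theorem X_pow_dvd_partSeries_sub_one {M : ℕ} {S : Finset ℕ} (hS : ∀ s ∈ S, M ≤ s) :
    X ^ M ∣ partSeries S - 1 := by
  refine X_pow_dvd_iff.mpr fun n hn ↦ ?_
  rw [map_sub, coeff_one, partSeries, coeff_mk, sub_eq_zero]
  rcases n.eq_zero_or_pos with rfl | hpos
  · simp [Partition.restricted]
  · rw [if_neg hpos.ne', Nat.cast_eq_zero, card_eq_zero, Partition.restricted, filter_eq_empty_iff]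
    intro p _ hp
    have hparts : p.parts ≠ 0 := fun h ↦ hpos.ne (by simpa [h] using p.parts_sum)
    obtain ⟨x, hx⟩ := Multiset.exists_mem_of_ne_zero hparts
    exact absurd (Partition.le_of_mem_parts hx) (hn.trans_le (hS x (hp x hx))).not_ge

theorem X_pow_mul_one_sub_X_pow_mul_partSeries_Icc {m : ℕ} (hm : 0 < m) (L : ℕ) :
    X ^ m * (1 - X ^ L) * partSeries (Icc m (m + L)) =
      partSeries (Ico m (m + L)) - partSeries (Ioc m (m + L)) := by
  have hm_le : m ≤ m + L := Nat.le_add_right m L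
  have hIco : (1 - X ^ (m + L)) * partSeries (Icc m (m + L)) = partSeries (Ico m (m + L)) := by
    rw [← Ico_insert_right hm_le]
    exact one_sub_X_pow_mul_partSeries_insert right_notMem_Ico (by grind)
  have hIoc : (1 - X ^ m) * partSeries (Icc m (m + L)) = partSeries (Ioc m (m + L)) := by
    rw [← Ioc_insert_left hm_le]
    exact one_sub_X_pow_mul_partSeries_insert left_notMem_Ioc (by grind)
  linear_combination hIco - hIoc

theorem one_sub_X_pow_mul_sum_Ico {a M : ℕ} (ha : 0 < a) (haM : a ≤ M) (L : ℕ) :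
    (1 - X ^ L) * ∑ m ∈ Ico a M, X ^ m * partSeries (Icc m (m + L)) =
      partSeries (Ico a (a + L)) - partSeries (Ico M (M + L)) := by
  rw [← neg_sub (partSeries (Ico M _)), ← sum_Ico_sub (fun m ↦ partSeries (Ico m (m + L))) haM,
    mul_sum, ← sum_neg_distrib]
  refine sum_congr rfl fun m hm ↦ ?_
  have hIoc : Ioc m (m + L) = Ico (m + 1) (m + 1 + L) := by grind
  rw [neg_sub, ← hIoc,
    ← X_pow_mul_one_sub_X_pow_mul_partSeries_Icc (ha.trans_le (mem_Ico.mp hm).1)]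
  ring

theorem card_inSmall2 (L N : ℕ) :
    (Nat.card {p : N.Partition // InSmall2 L p} : ℤ) =
      (X ^ 2 * partSeries (Icc 2 (2 + L))).coeff N := by
  rw [coeff_X_pow_mul_partSeries (by simp) (by simp), Nat.cast_inj]
  refine Nat.subtype_card _ fun p ↦ ?_
  simp only [Partition.restricted, mem_filter, mem_univ, true_and, mem_Icc, InSmall2,
    add_comm 2 L, and_comm]

theorem inBig3_iff_exists_min {L N : ℕ} {p : N.Partition} :
    InBig3 L p ↔ ∃ m ≥ 3, m ∈ p.parts ∧ ∀ x ∈ p.parts, x ∈ Icc m (m + L) := by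
  constructor
  · rintro ⟨hne, hge, hdiff⟩
    have hne' : p.parts.toFinset.Nonempty := by rwa [Multiset.toFinset_nonempty]
    obtain ⟨m, hm, hmin⟩ := p.parts.toFinset.exists_min_image id hne'
    simp only [Multiset.mem_toFinset, id] at hm hmin
    exact ⟨m, hge m hm, hm, fun x hx ↦ mem_Icc.mpr ⟨hmin x hx, hdiff x hx m hm⟩⟩
  · rintro ⟨m, hm3, hm, hIcc⟩
    simp only [mem_Icc] at hIcc
    refine ⟨fun h ↦ by simp [h] at hm, fun x hx ↦ hm3.trans (hIcc x hx).1, fun x hx y hy ↦ ?_⟩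
    have := hIcc x hx
    have := hIcc y hy
    omega

theorem card_inBig3 (L : ℕ) {N M : ℕ} (hNM : N < M) :
    (Nat.card {p : N.Partition // InBig3 L p} : ℤ) =
      (∑ m ∈ Ico 3 M, X ^ m * partSeries (Icc m (m + L))).coeff N := by
  let withMin (m : ℕ) : Finset N.Partition :=
    {p ∈ Partition.restricted N (· ∈ Icc m (m + L)) | m ∈ p.parts}
  have mem_withMin {m : ℕ} {p : N.Partition} :
      p ∈ withMin m ↔ (∀ x ∈ p.parts, x ∈ Icc m (m + L)) ∧ m ∈ p.parts := by
    simp [withMin, Partition.restricted]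
  have hdisjoint : (Ico 3 M : Set ℕ).PairwiseDisjoint withMin := by
    intro a _ b _ hab
    refine disjoint_left.mpr fun p ha hb ↦ hab ?_
    rw [mem_withMin] at ha hb
    exact le_antisymm (mem_Icc.mp (ha.1 b hb.2)).1 (mem_Icc.mp (hb.1 a ha.2)).1
  have hcard : Nat.card {p : N.Partition // InBig3 L p} = #((Ico 3 M).biUnion withMin) := by
    refine Nat.subtype_card _ fun p ↦ ?_
    simp only [inBig3_iff_exists_min, mem_biUnion, mem_withMin, mem_Ico]
    grind [Partition.le_of_mem_parts]
  rw [hcard, card_biUnion hdisjoint, map_sum, Nat.cast_sum]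
  refine sum_congr rfl fun m hm ↦ (coeff_X_pow_mul_partSeries ?_ ?_ N).symm
  · simp
  · grind

/-- The generating function of the partitions counted by `InBig3 L`. -/
noncomputable def bigSeries (L : ℕ) : ℤ⟦X⟧ :=
  .mk fun N ↦ Nat.card {p : N.Partition // InBig3 L p}

/-- The series `G_{L,2}(q)`. -/
noncomputable def gSeries (L : ℕ) : ℤ⟦X⟧ :=
  .mk (gL L)

theorem one_sub_X_pow_mul_bigSeries (L : ℕ) :
    (1 - X ^ L) * bigSeries L = partSeries (Ico 3 (3 + L)) - 1 := by
  have hdvd {M : ℕ} (hM : 3 ≤ M) :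
      X ^ M ∣ (1 - X ^ L) * bigSeries L - (partSeries (Ico 3 (3 + L)) - 1) := by
    let partialSum : ℤ⟦X⟧ := ∑ m ∈ Ico 3 M, X ^ m * partSeries (Icc m (m + L))
    have htrunc : X ^ M ∣ bigSeries L - partialSum := by
      refine X_pow_dvd_iff.mpr fun N hN ↦ ?_
      rw [map_sub, bigSeries, coeff_mk, card_inBig3 L hN, sub_self]
    have htail : X ^ M ∣ partSeries (Ico M (M + L)) - 1 :=
      X_pow_dvd_partSeries_sub_one fun s hs ↦ (mem_Ico.mp hs).1
    convert (htrunc.mul_left (1 - X ^ L)).sub htail using 1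
    linear_combination one_sub_X_pow_mul_sum_Ico three_pos hM L
  ext N
  rw [← sub_eq_zero, ← map_sub]
  exact X_pow_dvd_iff.mp (hdvd (le_add_left le_rfl)) N (by omega : N < N + 3)

theorem one_sub_X_pow_mul_gSeries (L : ℕ) :
    (1 - X ^ L) * gSeries L =
      (2 * X ^ 2 - X ^ (2 + L) - 1) * partSeries (Icc 2 (2 + L)) + 1 := by
  have hsplit : gSeries L = X ^ 2 * partSeries (Icc 2 (2 + L)) - bigSeries L := by
    ext N
    rw [map_sub, ← card_inSmall2, gSeries, bigSeries, coeff_mk, coeff_mk, gL]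
  have hIcc : (1 - X ^ 2) * partSeries (Icc 2 (2 + L)) = partSeries (Ico 3 (3 + L)) := by
    have hinsert : Icc 2 (2 + L) = insert 2 (Ico 3 (3 + L)) := by grind
    rw [hinsert]
    exact one_sub_X_pow_mul_partSeries_insert (by simp) (by simp)
  rw [hsplit]
  linear_combination hIcc - one_sub_X_pow_mul_bigSeries L

theorem one_sub_X_pow_four_mul_gSeries_four :
    (1 - X ^ 4) * gSeries 4 = (X ^ 4 + X ^ 2 - 1) * partSeries {3, 4, 5, 6} + 1 := by
  have h2 : (1 - X ^ 2) * partSeries {2, 3, 4, 5, 6} = partSeries {3, 4, 5, 6} :=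
    one_sub_X_pow_mul_partSeries_insert (by decide) (by decide)
  have hIcc : Icc 2 (2 + 4) = {2, 3, 4, 5, 6} := by decide
  linear_combination one_sub_X_pow_mul_gSeries 4 + (X ^ 4 + X ^ 2 - 1) * h2 +
    (2 * X ^ 2 - X ^ 6 - 1) * congrArg partSeries hIcc

theorem gSeries_four_add_X_pow_three_add_X_pow_nine :
    gSeries 4 + X ^ 3 + X ^ 9 =
      X ^ 2 + X ^ 8 * partSeries {4} + X ^ 10 * partSeries {4} * partSeries {3, 4, 5, 6} +
        X ^ 14 * partSeries {3, 4, 5, 6} + X ^ 14 * partSeries {3, 4, 5} +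
        (X ^ 11 + X ^ 20) * partSeries {5, 6} := by
  set P := partSeries {3, 4, 5, 6} with hP
  have h4 : (1 - X ^ 4) * partSeries {4} = 1 := by
    simpa using prod_one_sub_X_pow_mul_partSeries (S := {4}) (by decide)
  have h56 : partSeries {5, 6} = (1 - X ^ 4) * ((1 - X ^ 3) * P) := by
    rw [hP, one_sub_X_pow_mul_partSeries_insert (by decide) (by decide),
      one_sub_X_pow_mul_partSeries_insert (by decide) (by decide)]
  have h345 : partSeries {3, 4, 5} = (1 - X ^ 6) * P := by
    have hinsert : ({3, 4, 5, 6} : Finset ℕ) = insert 6 {3, 4, 5} := by decide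
    rw [hP, hinsert, one_sub_X_pow_mul_partSeries_insert (by decide) (by decide)]
  have h3456 : (1 - X ^ 3) * (1 - X ^ 4) * (1 - X ^ 5) * (1 - X ^ 6) * P = 1 := by
    simpa [mul_assoc] using prod_one_sub_X_pow_mul_partSeries (S := {3, 4, 5, 6}) (by decide)
  rw [h56, h345]
  refine mul_left_cancel₀ (left_ne_zero_of_mul_eq_one h4) ?_
  linear_combination one_sub_X_pow_four_mul_gSeries_four - (X ^ 8 + X ^ 10 * P) * h4 +
    (X ^ 2 - X ^ 3 - X ^ 6 + X ^ 7 + X ^ 8 - X ^ 9 + X ^ 13 - 1) * h3456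

theorem gSeries_four_add_mem_nonnegSeries :
    gSeries 4 + X ^ 3 + X ^ 9 ∈ nonnegSeries ℤ := by
  rw [gSeries_four_add_X_pow_three_add_X_pow_nine]
  have hX (i : ℕ) : X ^ i ∈ nonnegSeries ℤ := pow_mem (X_mem_nonnegSeries ℤ) i
  have hP := partSeries_mem_nonnegSeries
  have hXP (i : ℕ) (S : Finset ℕ) : X ^ i * partSeries S ∈ nonnegSeries ℤ := mul_mem (hX i) (hP S)
  exact add_mem (add_mem (add_mem (add_mem (add_mem (hX 2) (hXP 8 _)) (mul_mem (hXP 10 _) (hP _)))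
    (hXP 14 _)) (hXP 14 _)) (mul_mem (add_mem (hX 11) (hX 20)) (hP _))

theorem gL_four_add_nonneg (N : ℕ) :
    0 ≤ gL 4 N + (if N = 3 then 1 else 0) + (if N = 9 then 1 else 0) := by
  simpa only [map_add, gSeries, coeff_mk, coeff_X_pow] using gSeries_four_add_mem_nonnegSeries N

theorem stmt_16 :
    (∀ N : ℕ, 0 < N → N ≠ 3 → N ≠ 9 → 0 ≤ gL 4 N) ∧
      -1 ≤ gL 4 3 ∧ -1 ≤ gL 4 9 := by
  refine ⟨fun N _ h3 h9 ↦ ?_, ?_, ?_⟩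
  · simpa [h3, h9] using gL_four_add_nonneg N
  · simpa [neg_le_iff_add_nonneg] using gL_four_add_nonneg 3
  · simpa [neg_le_iff_add_nonneg] using gL_four_add_nonneg 9
end
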